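/- arXiv:quant-ph/0402123 — 3 statements merged into one kernel-verified Lean document; each statement's English description precedes it below -/
import Mathlib

section
/- For every real γ > 0 there exists a real α > 0 with the following property: for all positive integers k and N with k ≤ N, every real polynomial p of degree at most α·√(k·N) that satisfies p(i) = 0 for every integer i ∈ {0, 1, …, k−1} and 0 ≤ p(i) ≤ 1 for every integer i ∈ {0, 1, …, N}, also satisfies p(k) ≤ 2^(−γ·k). -/
/-!
The proof is Lagrange interpolation at well chosen integer nodes (`node`). Fix a large integer
spacing `s`, and let `M` be the largest integer with `4skM² ≤ N`. The nodes are the prescribed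
zeros `0, …, k - 1` together with the blocks `4skl² - sv`, `0 ≤ v < k`, for `1 ≤ l ≤ M`. All of
them are integers in `[0, N]`, and there are `k(M + 1)` of them, which exceeds the degree of `p`
once `α = 1 / √(4s)`. Hence `p(k)` is at most the sum over blocks `l ≥ 1` of the absolute values
at `k` of the Lagrange basis polynomials (`eval_le_of_nodes`).

Such a basis polynomial, for the node `x` at position `u` of block `i`, is a product of ratios
`|k - y| / |x - y|`, grouped by the position `v` of `y` (`column_bound`). In each group, block `0`
gives `O(1 / (s i²))`, because the zero `v` satisfies `(k - v) / (x - v) ≤ k / x`. The blocks other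
than `0` and `i` give `O(1)`, because `∏ l² / |i² - l²| ≤ 2` uniformly in `M`
(`prod_sq_le_two`) and the shifts inside the blocks perturb this only by a bounded factor
(`prod_sq_perturbed_le_four`). Block `i` itself gives `O(k i² / |u - v|)` for `v ≠ u`, where the
spacing `s` compensates the factor `s` in the size of the nodes. Altogether the basis polynomial
is at most `(2 / (s i²)) (8k / s)^(k-1) / (u! (k-1-u)!)` (`basis_bound`). Summing over `u` by the
binomial theorem and over `i` by convergence of `∑ 1 / i²`, and using `k^k / k! ≤ e^k`, gives
`p(k) ≤ (48 / s)^k`, so `s ≥ 48 · 2^γ` suffices.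
-/

/-! ### Products and sums over differences of squares -/

lemma factorial_shift_le {a b : ℕ} (hab : a ≤ b) (j : ℕ) :
    (a + j).factorial * b.factorial ≤ a.factorial * (b + j).factorial := by
  induction j with
  | zero => simp
  | succ j ih =>
    rw [← add_assoc, ← add_assoc, Nat.factorial_succ, Nat.factorial_succ]
    calc (a + j + 1) * (a + j).factorial * b.factorial
        = (a + j + 1) * ((a + j).factorial * b.factorial) := by ring
      _ ≤ (b + j + 1) * (a.factorial * (b + j).factorial) := by gcongr
      _ = _ := by ring

/-- Closed form of `∏ l² / |i² - l²|` over `1 ≤ l ≤ M` when `M < i`. -/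
lemma prod_sq_below (i M : ℕ) (hM : M < i) :
    (∏ l ∈ Finset.Icc 1 M, (l : ℝ) ^ 2 / |(i : ℝ) ^ 2 - (l : ℝ) ^ 2|)
      * ((i - 1).factorial * (i + M).factorial)
      = (M.factorial : ℝ) ^ 2 * (i - M - 1).factorial * i.factorial := by
  induction M with
  | zero => simp
  | succ M ih =>
    obtain ⟨j, rfl⟩ : ∃ j, i = M + 1 + j + 1 := ⟨i - M - 2, by omega⟩
    have ih := ih (by omega)
    have e1 : M + 1 + j + 1 - M - 1 = j + 1 := by omega
    have e2 : M + 1 + j + 1 - (M + 1) - 1 = j := by omega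
    rw [e1, Nat.factorial_succ j] at ih
    rw [e2, Finset.prod_Icc_succ_top (by omega), ← add_assoc _ M 1,
      Nat.factorial_succ (_ + M), Nat.factorial_succ M]
    have hpos : ((M + 1 + j + 1 : ℕ) : ℝ) ^ 2 - ((M + 1 : ℕ) : ℝ) ^ 2
        = (j + 1) * (2 * M + j + 3) := by push_cast; ring
    rw [hpos, abs_of_pos (by positivity)]
    push_cast at ih ⊢
    field_simp
    linear_combination (2 * M + j + 3 : ℝ) * ih

/-- Closed form of `∏ l² / |i² - l²|` over `1 ≤ l ≤ M`, `l ≠ i`, when `M = i + m`; the value is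
`2 * M! ^ 2 / ((M + i)! * (M - i)!)`. -/
lemma prod_sq_above (i m : ℕ) (hi : 1 ≤ i) :
    (∏ l ∈ (Finset.Icc 1 (i + m)).erase i, (l : ℝ) ^ 2 / |(i : ℝ) ^ 2 - (l : ℝ) ^ 2|)
      * ((i + (i + m)).factorial * m.factorial) = 2 * ((i + m).factorial : ℝ) ^ 2 := by
  induction m with
  | zero =>
    obtain ⟨j, rfl⟩ : ∃ j, i = j + 1 := ⟨i - 1, by omega⟩
    have h := prod_sq_below (j + 1) j (by omega)
    have e : (Finset.Icc 1 (j + 1 + 0)).erase (j + 1) = Finset.Icc 1 j := by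
      grind
    rw [e]
    have e1 : j + 1 - 1 = j := by omega
    have e2 : j + 1 - j - 1 = 0 := by omega
    rw [e1, e2] at h
    have e3 : j + 1 + (j + 1 + 0) = (j + 1 + j) + 1 := by omega
    rw [e3, Nat.factorial_succ (j + 1 + j), add_zero]
    rw [Nat.factorial_succ j] at h ⊢
    have hj : (j.factorial : ℝ) ≠ 0 := by positivity
    simp only [Nat.factorial_zero] at h ⊢
    apply mul_left_cancel₀ hj
    push_cast at h ⊢
    linear_combination 2 * (j + 1 : ℝ) * h
  | succ m ih =>
    have e : (Finset.Icc 1 (i + (m + 1))).erase i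
        = insert (i + m + 1) ((Finset.Icc 1 (i + m)).erase i) := by
      grind
    rw [e, Finset.prod_insert (by simp)]
    have hpos : (i : ℝ) ^ 2 - ((i + m + 1 : ℕ) : ℝ) ^ 2
        = -((m + 1) * (2 * i + m + 1)) := by push_cast; ring
    rw [hpos, abs_neg, abs_of_pos (by positivity)]
    have e3 : i + (i + (m + 1)) = i + (i + m) + 1 := by omega
    have e4 : i + (m + 1) = i + m + 1 := by omega
    rw [e3, e4, Nat.factorial_succ (i + (i + m)), Nat.factorial_succ m, Nat.factorial_succ (i + m)]
    push_cast
    field_simp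
    linear_combination (2 * i + m + 1 : ℝ) * ih

lemma prod_sq_le_two {i M : ℕ} (hi : 1 ≤ i) (hM : i ≤ M) :
    ∏ l ∈ (Finset.Icc 1 M).erase i, (l : ℝ) ^ 2 / |(i : ℝ) ^ 2 - (l : ℝ) ^ 2| ≤ 2 := by
  obtain ⟨m, rfl⟩ := Nat.exists_eq_add_of_le hM
  have h := prod_sq_above i m hi
  have h2 : (i + m).factorial * (i + m).factorial ≤ m.factorial * (i + (i + m)).factorial := by
    have := factorial_shift_le (show m ≤ i + m by omega) i
    rwa [add_comm m i, add_comm (i + m) i] at this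
  have h3 : ((i + m).factorial : ℝ) ^ 2 ≤ (i + (i + m)).factorial * m.factorial := by
    rw [sq, mul_comm ((i + (i + m)).factorial : ℝ)]; exact_mod_cast h2
  have hp : (0 : ℝ) < (i + (i + m)).factorial * m.factorial := by positivity
  by_contra! hc
  nlinarith

/-- The bound telescopes: `i² - l² ≥ (i - l) * (i - l + 1)`. -/
lemma sum_inv_below (i M : ℕ) (hM : M < i) :
    ∑ l ∈ Finset.Icc 1 M, 1 / |(i : ℝ) ^ 2 - (l : ℝ) ^ 2| ≤ 1 / ((i : ℝ) - M) := by
  induction M with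
  | zero => simp
  | succ M ih =>
    obtain ⟨j, rfl⟩ : ∃ j, i = M + 1 + j + 1 := ⟨i - M - 2, by omega⟩
    have ih := ih (by omega)
    rw [Finset.sum_Icc_succ_top (by omega)]
    have hpos : ((M + 1 + j + 1 : ℕ) : ℝ) ^ 2 - ((M + 1 : ℕ) : ℝ) ^ 2
        = (j + 1) * (2 * M + j + 3) := by push_cast; ring
    rw [hpos, abs_of_pos (by positivity)]
    have e1 : ((M + 1 + j + 1 : ℕ) : ℝ) - M = j + 2 := by push_cast; ring
    have e2 : ((M + 1 + j + 1 : ℕ) : ℝ) - (M + 1 : ℕ) = j + 1 := by push_cast; ring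
    rw [e1] at ih
    rw [e2]
    have h1 : (1 : ℝ) / ((j + 1) * (2 * M + j + 3)) ≤ 1 / ((j + 1) * (j + 2)) := by
      gcongr 1 / ((j + 1) * ?_)
      linarith [(Nat.cast_nonneg M : (0 : ℝ) ≤ M)]
    have h2 : (1 : ℝ) / ((j + 1) * (j + 2)) = 1 / (j + 1) - 1 / (j + 2) := by
      field_simp; ring
    linarith

/-- The terms with `l < i` contribute at most `1`; those with `l > i` telescope through
`l² - i² ≥ (l - i) * (l - i + 1)`. -/
lemma sum_inv_above (i m : ℕ) (hi : 1 ≤ i) :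
    ∑ l ∈ (Finset.Icc 1 (i + m)).erase i, 1 / |(i : ℝ) ^ 2 - (l : ℝ) ^ 2|
      ≤ 2 - 1 / ((m : ℝ) + 1) := by
  induction m with
  | zero =>
    obtain ⟨j, rfl⟩ : ∃ j, i = j + 1 := ⟨i - 1, by omega⟩
    have h := sum_inv_below (j + 1) j (by omega)
    have e : (Finset.Icc 1 (j + 1 + 0)).erase (j + 1) = Finset.Icc 1 j := by
      grind
    rw [e]
    refine h.trans (le_of_eq ?_)
    push_cast
    norm_num
  | succ m ih =>
    have e : (Finset.Icc 1 (i + (m + 1))).erase i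
        = insert (i + m + 1) ((Finset.Icc 1 (i + m)).erase i) := by
      grind
    rw [e, Finset.sum_insert (by simp)]
    have hpos : (i : ℝ) ^ 2 - ((i + m + 1 : ℕ) : ℝ) ^ 2
        = -((m + 1) * (2 * i + m + 1)) := by push_cast; ring
    rw [hpos, abs_neg, abs_of_pos (by positivity)]
    have h1 : (1 : ℝ) / ((m + 1) * (2 * i + m + 1)) ≤ 1 / ((m + 1) * (m + 2)) := by
      gcongr 1 / ((m + 1) * ?_)
      linarith [(Nat.one_le_cast.mpr hi : (1 : ℝ) ≤ i)]
    have h2 : (1 : ℝ) / ((m + 1) * (m + 2)) = 1 / (m + 1) - 1 / (m + 2) := by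
      field_simp; ring
    have h3 : (((m + 1 : ℕ) : ℝ) + 1) = m + 2 := by push_cast; ring
    rw [h3]
    linarith

lemma one_le_abs_sq_sub {i l : ℕ} (h : l ≠ i) : (1 : ℝ) ≤ |(i : ℝ) ^ 2 - (l : ℝ) ^ 2| := by
  have h1 : (i : ℤ) ^ 2 - (l : ℤ) ^ 2 ≠ 0 := by
    intro h0
    apply h
    have : l ^ 2 = i ^ 2 := by zify; linarith
    exact (Nat.pow_left_injective (n := 2) (by norm_num)) this
  exact_mod_cast Int.one_le_abs h1

lemma one_sub_sum_le_prod {ι : Type*} [DecidableEq ι] (S : Finset ι) (f : ι → ℝ)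
    (h0 : ∀ l ∈ S, 0 ≤ f l) (h1 : ∀ l ∈ S, f l ≤ 1) :
    1 - ∑ l ∈ S, f l ≤ ∏ l ∈ S, (1 - f l) := by
  induction S using Finset.induction_on with
  | empty => simp
  | insert a S ha ih =>
    rw [Finset.sum_insert ha, Finset.prod_insert ha]
    have ih := ih (fun l hl => h0 l (by simp [hl])) (fun l hl => h1 l (by simp [hl]))
    have hs : 0 ≤ ∑ l ∈ S, f l := Finset.sum_nonneg (fun l hl => h0 l (by simp [hl]))
    have ha0 := h0 a (by simp)
    have ha1 := h1 a (by simp)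
    nlinarith [mul_le_mul_of_nonneg_left ih (sub_nonneg.mpr ha1), mul_nonneg ha0 hs]

/-- Lowering each denominator by `1/4` costs at most a factor `2`, since `∑ 1 / |i² - l²| ≤ 2`. -/
lemma prod_sq_perturbed_le_four {i M : ℕ} (hi : 1 ≤ i) (hM : i ≤ M) :
    ∏ l ∈ (Finset.Icc 1 M).erase i, (l : ℝ) ^ 2 / (|(i : ℝ) ^ 2 - (l : ℝ) ^ 2| - 1 / 4) ≤ 4 := by
  have hA := prod_sq_le_two hi hM
  have hS : ∑ l ∈ (Finset.Icc 1 M).erase i, 1 / |(i : ℝ) ^ 2 - (l : ℝ) ^ 2| ≤ 2 := by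
    obtain ⟨m, rfl⟩ := Nat.exists_eq_add_of_le hM
    refine (sum_inv_above i m hi).trans ?_
    have : (0 : ℝ) ≤ 1 / ((m : ℝ) + 1) := by positivity
    linarith
  have hge : ∀ l ∈ (Finset.Icc 1 M).erase i, (1 : ℝ) ≤ |(i : ℝ) ^ 2 - (l : ℝ) ^ 2| :=
    fun l hl => one_le_abs_sq_sub (Finset.ne_of_mem_erase hl)
  have hB := one_sub_sum_le_prod ((Finset.Icc 1 M).erase i)
    (fun l => 1 / 4 * (1 / |(i : ℝ) ^ 2 - (l : ℝ) ^ 2|)) (fun l hl => by positivity)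
    (fun l hl => by
      have := hge l hl
      have : 1 / |(i : ℝ) ^ 2 - (l : ℝ) ^ 2| ≤ 1 := by
        rw [div_le_one (by linarith)]; exact this
      linarith)
  rw [← Finset.mul_sum] at hB
  have hB' : (1 / 2 : ℝ) ≤ ∏ l ∈ (Finset.Icc 1 M).erase i,
      (1 - 1 / 4 * (1 / |(i : ℝ) ^ 2 - (l : ℝ) ^ 2|)) := by linarith
  have hEq : ∏ l ∈ (Finset.Icc 1 M).erase i, (l : ℝ) ^ 2 / (|(i : ℝ) ^ 2 - (l : ℝ) ^ 2| - 1 / 4)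
      = (∏ l ∈ (Finset.Icc 1 M).erase i, (l : ℝ) ^ 2 / |(i : ℝ) ^ 2 - (l : ℝ) ^ 2|) /
        ∏ l ∈ (Finset.Icc 1 M).erase i, (1 - 1 / 4 * (1 / |(i : ℝ) ^ 2 - (l : ℝ) ^ 2|)) := by
    rw [← Finset.prod_div_distrib]
    refine Finset.prod_congr rfl fun l hl => ?_
    have h1 := hge l hl
    have h2 : |(i : ℝ) ^ 2 - (l : ℝ) ^ 2| ≠ 0 := by linarith
    rw [div_div]
    congr 1
    field_simp
  rw [hEq, div_le_iff₀ (by linarith)]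
  linarith

/-- The term `i = 0` is `1 / 0 = 0`. -/
lemma sum_inv_sq_le_two (M : ℕ) : ∑ i ∈ Finset.range (M + 1), 1 / (i : ℝ) ^ 2 ≤ 2 := by
  have key : ∀ m : ℕ, ∑ i ∈ Finset.range (m + 2), 1 / (i : ℝ) ^ 2 ≤ 2 - 1 / ((m : ℝ) + 1) := by
    intro m
    induction m with
    | zero => norm_num [Finset.sum_range_succ]
    | succ m ih =>
      rw [Finset.sum_range_succ]
      have h1 : 1 / ((m + 1 + 1 : ℕ) : ℝ) ^ 2 ≤ 1 / (((m : ℝ) + 1) * (m + 2)) := by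
        apply one_div_le_one_div_of_le (by positivity)
        push_cast; nlinarith [(Nat.cast_nonneg m : (0 : ℝ) ≤ m)]
      have h2 : (1 : ℝ) / ((m + 1) * (m + 2)) = 1 / (m + 1) - 1 / (m + 2) := by
        field_simp; ring
      have h3 : (((m + 1 : ℕ) : ℝ) + 1) = m + 2 := by push_cast; ring
      rw [h3]
      linarith
  cases M with
  | zero => simp
  | succ m =>
    have : (0 : ℝ) ≤ 1 / ((m : ℝ) + 1) := by positivity
    linarith [key m]

lemma prod_abs_sub (n u : ℕ) (hu : u ≤ n) :
    ∏ v ∈ (Finset.range (n + 1)).erase u, |(u : ℝ) - v| = u.factorial * (n - u).factorial := by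
  obtain ⟨m, rfl⟩ := Nat.exists_eq_add_of_le hu
  rw [Nat.add_sub_cancel_left]
  induction m with
  | zero =>
    have e : (Finset.range (u + 0 + 1)).erase u = Finset.range u := by grind
    rw [e]
    have : ∏ v ∈ Finset.range u, |(u : ℝ) - v|
        = ∏ v ∈ Finset.range u, ((u - 1 - v : ℕ) + 1 : ℝ) := by
      refine Finset.prod_congr rfl fun v hv => ?_
      have hv := Finset.mem_range.mp hv
      obtain ⟨w, rfl⟩ : ∃ w, u = v + w + 1 := ⟨u - v - 1, by omega⟩
      have : v + w + 1 - 1 - v = w := by omega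
      rw [this, abs_of_nonneg] <;> push_cast <;> linarith [(Nat.cast_nonneg w : (0 : ℝ) ≤ w)]
    rw [this, Finset.prod_range_reflect (fun v => ((v : ℝ) + 1))]
    have := Finset.prod_range_add_one_eq_factorial u
    rw [← this]
    push_cast
    simp
  | succ m ih =>
    have e : (Finset.range (u + (m + 1) + 1)).erase u
        = insert (u + m + 1) ((Finset.range (u + m + 1)).erase u) := by
      grind
    rw [e, Finset.prod_insert (by simp), ih (by omega), Nat.factorial_succ]
    have : (u : ℝ) - ((u + m + 1 : ℕ) : ℝ) = -(m + 1) := by push_cast; ring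
    rw [this, abs_neg, abs_of_pos (by positivity)]
    push_cast; ring

lemma sum_inv_factorial_mul (n : ℕ) :
    ∑ u ∈ Finset.range (n + 1), 1 / ((u.factorial : ℝ) * (n - u).factorial)
      = 2 ^ n / n.factorial := by
  rw [eq_div_iff (by positivity), Finset.sum_mul]
  have := Nat.sum_range_choose n
  rw [← Nat.cast_inj (R := ℝ)] at this
  push_cast at this
  rw [← this]
  refine Finset.sum_congr rfl fun u hu => ?_
  rw [Nat.cast_choose ℝ (Nat.lt_succ_iff.mp (Finset.mem_range.mp hu))]
  ring

/-! ### The interpolation nodes -/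

/-- The interpolation nodes, indexed by a block `l` and a position `v < k` in the block. Block `0`
consists of the prescribed zeros `0, …, k - 1`; block `l ≥ 1` consists of the `k` integers
`4skl² - sv`, spaced by `s`. The blocks grow quadratically, like Chebyshev nodes near an endpoint,
and the position is subtracted, so that `4skl²` is an upper bound for the whole block. -/
noncomputable def node (k s l v : ℕ) : ℝ :=
  if l = 0 then (v : ℝ) else 4 * s * k * (l : ℝ) ^ 2 - s * v

lemma node_zero (k s v : ℕ) : node k s 0 v = v := by simp [node]

lemma node_pos {k s l : ℕ} (v : ℕ) (hl : l ≠ 0) :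
    node k s l v = 4 * s * k * (l : ℝ) ^ 2 - s * v := by simp [node, hl]

lemma one_le_sq {l : ℕ} (hl : l ≠ 0) : (1 : ℝ) ≤ (l : ℝ) ^ 2 := by
  exact_mod_cast Nat.one_le_pow 2 l (Nat.pos_of_ne_zero hl)

lemma node_lower {k s l v : ℕ} (hl : l ≠ 0) (hv : v < k) :
    2 * s * k * (l : ℝ) ^ 2 ≤ node k s l v := by
  rw [node_pos v hl]
  have hv' : (v : ℝ) ≤ k := by exact_mod_cast hv.le
  have h1 : (s : ℝ) * v ≤ s * k := by gcongr
  have h2 : (s : ℝ) * k * 1 ≤ s * k * (l : ℝ) ^ 2 := by gcongr; exact one_le_sq hl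
  have h3 : (0 : ℝ) ≤ s * k := by positivity
  linarith

/-- The perturbation `s * (u - v)` inside the blocks is at most `1/4` of the unit `4 * s * k`, so
two blocks are separated as the squares `i ^ 2`, `l ^ 2` are, up to `1/4`. -/
lemma node_block_sep {k s i l u v : ℕ} (hi : i ≠ 0) (hl : l ≠ 0) (hu : u < k) (hv : v < k) :
    4 * s * k * (|(i : ℝ) ^ 2 - (l : ℝ) ^ 2| - 1 / 4) ≤ |node k s i u - node k s l v| := by
  rw [node_pos u hi, node_pos v hl]
  have hv' : (v : ℝ) ≤ k := by exact_mod_cast hv.le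
  have hu' : (u : ℝ) ≤ k := by exact_mod_cast hu.le
  have h0 : |(u : ℝ) - v| ≤ k := by
    rw [abs_le]; constructor <;> linarith [(Nat.cast_nonneg u : (0 : ℝ) ≤ u),
      (Nat.cast_nonneg v : (0 : ℝ) ≤ v)]
  have e : (4 * s * k * (i : ℝ) ^ 2 - s * u) - (4 * s * k * (l : ℝ) ^ 2 - s * v)
      = 4 * s * k * ((i : ℝ) ^ 2 - (l : ℝ) ^ 2) - s * (u - v) := by ring
  have h1 := abs_sub_abs_le_abs_sub (4 * s * k * ((i : ℝ) ^ 2 - (l : ℝ) ^ 2)) (s * ((u : ℝ) - v))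
  rw [abs_mul, abs_mul (s : ℝ), abs_of_nonneg (by positivity : (0 : ℝ) ≤ 4 * s * k),
    abs_of_nonneg (by positivity : (0 : ℝ) ≤ s)] at h1
  have h2 : (s : ℝ) * |(u : ℝ) - v| ≤ s * k := by gcongr
  rw [e]
  linarith

lemma abs_sub_node_le {k s l v : ℕ} (hs : 1 ≤ s) (hl : l ≠ 0) (hv : v < k) :
    |(k : ℝ) - node k s l v| ≤ 4 * s * k * (l : ℝ) ^ 2 := by
  have h1 := node_lower (s := s) hl hv
  have h2 : node k s l v ≤ 4 * s * k * (l : ℝ) ^ 2 := by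
    rw [node_pos v hl]; linarith [(by positivity : (0 : ℝ) ≤ s * v)]
  have h3 : (k : ℝ) ≤ 2 * s * k * (l : ℝ) ^ 2 := by
    have a := one_le_sq hl
    have b : (1 : ℝ) ≤ s := by exact_mod_cast hs
    have : (1 : ℝ) * k * 1 ≤ (2 * s) * k * (l : ℝ) ^ 2 := by gcongr; linarith
    linarith
  rw [abs_le]; constructor <;> linarith [(Nat.cast_nonneg k : (0 : ℝ) ≤ k)]

lemma node_ne_node {k s i l u v : ℕ} (hs : 1 ≤ s) (hi : i ≠ 0) (hu : u < k) (hv : v < k)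
    (hne : (i, u) ≠ (l, v)) : node k s i u ≠ node k s l v := by
  have hk : (0 : ℝ) < k := by exact_mod_cast (by omega : 0 < k)
  have hs' : (1 : ℝ) ≤ s := by exact_mod_cast hs
  rcases Nat.eq_zero_or_pos l with rfl | hl
  · rw [node_zero]
    have h1 := node_lower (s := s) hi hu
    have a := one_le_sq hi
    have hv' : (v : ℝ) < k := by exact_mod_cast hv
    have : (1 : ℝ) * k * 1 ≤ (2 * s) * k * (i : ℝ) ^ 2 := by gcongr; linarith
    intro h; linarith
  · have hl := hl.ne'
    by_cases h : l = i
    · subst h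
      rw [node_pos u hl, node_pos v hl]
      intro h
      have : (s : ℝ) * (u - v) = 0 := by linarith
      rcases mul_eq_zero.mp this with h | h
      · linarith
      · apply hne
        have : (u : ℝ) = v := by linarith
        rw [Nat.cast_inj.mp this]
    · have h1 := node_block_sep (s := s) hi hl hu hv
      have h2 := one_le_abs_sq_sub h
      have h3 : 0 < 4 * s * k * (|(i : ℝ) ^ 2 - (l : ℝ) ^ 2| - 1 / 4) := by
        have : 0 < |(i : ℝ) ^ 2 - (l : ℝ) ^ 2| - 1 / 4 := by linarith
        positivity
      intro h; rw [h] at h1; simp at h1; linarith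

lemma node_injOn {k s M : ℕ} (hs : 1 ≤ s) :
    Set.InjOn (fun x : ℕ × ℕ => node k s x.1 x.2)
      (Finset.range (M + 1) ×ˢ Finset.range k : Finset (ℕ × ℕ)) := by
  rintro ⟨i, u⟩ hx ⟨l, v⟩ hy h
  simp only [Finset.coe_product, Set.mem_prod, Finset.mem_coe, Finset.mem_range] at hx hy
  by_contra hne
  rcases Nat.eq_zero_or_pos i with rfl | hi
  · rcases Nat.eq_zero_or_pos l with rfl | hl
    · simp only [node_zero, Nat.cast_inj] at h
      exact hne (by rw [h])
    · exact node_ne_node hs hl.ne' hy.2 hx.2 (Ne.symm hne) h.symm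
  · exact node_ne_node hs hi.ne' hx.2 hy.2 hne h

/-! ### The Lagrange basis polynomials at `k` -/

/-- The part of the Lagrange product `∏ |k - y| / |x - y|`, for the node `x = node k s i u`, that
comes from the nodes `y` at position `v` of all blocks. Block `0` contributes at most
`1 / (2 * s * i ^ 2)`, the blocks other than `0` and `i` together at most `4`, and block `i`
contributes at most `4 * k * i ^ 2 / |u - v|` when `v ≠ u`. So the powers of `i` cancel except at
`v = u`, where `1 / i ^ 2` is left over and makes the sum over `i` converge. -/
lemma column_bound {k s M i u v : ℕ} (hs : 1 ≤ s) (hi : i ≠ 0) (hM : i ≤ M) (hu : u < k)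
    (hv : v < k) (F : ℕ × ℕ → ℝ)
    (hF : ∀ y, F y = if y = (i, u) then 1 else
      |(k : ℝ) - node k s y.1 y.2| / |node k s i u - node k s y.1 y.2|) :
    ∏ l ∈ Finset.range (M + 1), F (l, v)
      ≤ if v = u then 2 / (s * (i : ℝ) ^ 2) else 8 * k / s / |(u : ℝ) - v| := by
  have hF0 : ∀ y, 0 ≤ F y := fun y => by rw [hF]; split_ifs <;> positivity
  have hk : (0 : ℝ) < k := by exact_mod_cast (by omega : 0 < k)
  have hs' : (1 : ℝ) ≤ s := by exact_mod_cast hs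
  have hi2 := one_le_sq hi
  have e : Finset.range (M + 1) = insert 0 (insert i ((Finset.Icc 1 M).erase i)) := by grind
  rw [e, Finset.prod_insert (by grind), Finset.prod_insert (by grind)]
  have h0 : F (0, v) ≤ 1 / (2 * s * (i : ℝ) ^ 2) := by
    have hx := node_lower (s := s) hi hu
    have hxk : (1 : ℝ) * k * 1 ≤ (2 * s) * k * (i : ℝ) ^ 2 := by gcongr; linarith
    have hv' : (v : ℝ) < k := by exact_mod_cast hv
    have hv0 : (0 : ℝ) ≤ v := by positivity
    rw [hF, if_neg (by simp; omega)]
    simp only [node_zero]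
    rw [abs_of_pos (by linarith), abs_of_pos (by linarith),
      div_le_div_iff₀ (by linarith) (by positivity)]
    have : (v : ℝ) * 1 ≤ v * (2 * s * (i : ℝ) ^ 2) := by gcongr; nlinarith
    linarith
  have hrest : ∏ l ∈ (Finset.Icc 1 M).erase i, F (l, v) ≤ 4 := by
    refine (Finset.prod_le_prod (fun l _ => hF0 _) fun l hl => ?_).trans
      (prod_sq_perturbed_le_four (Nat.pos_of_ne_zero hi) hM)
    have hli := Finset.ne_of_mem_erase hl
    have hl0 : l ≠ 0 := by grind
    have hd := one_le_abs_sq_sub hli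
    have hd' : 0 < |(i : ℝ) ^ 2 - (l : ℝ) ^ 2| - 1 / 4 := by linarith
    rw [hF, if_neg (by simp [hli])]
    calc _ ≤ (4 * s * k * (l : ℝ) ^ 2) / (4 * s * k * (|(i : ℝ) ^ 2 - (l : ℝ) ^ 2| - 1 / 4)) := by
          apply div_le_div₀ (by positivity) (abs_sub_node_le hs hl0 hv) (by positivity)
            (node_block_sep hi hl0 hu hv)
      _ = _ := by rw [mul_div_mul_left]; positivity
  have hR0 : 0 ≤ ∏ l ∈ (Finset.Icc 1 M).erase i, F (l, v) := Finset.prod_nonneg fun l _ => hF0 _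
  split_ifs with hvu
  · have hFi : F (i, v) = 1 := by rw [hF, if_pos (by rw [hvu])]
    rw [hFi, one_mul]
    calc _ ≤ 1 / (2 * s * (i : ℝ) ^ 2) * 4 := by gcongr
      _ = _ := by field_simp; norm_num
  · have huv : 0 < |(u : ℝ) - v| := by
      rw [abs_pos, sub_ne_zero]; exact fun h => hvu (Nat.cast_inj.mp h).symm
    have hFi : F (i, v) ≤ 4 * k * (i : ℝ) ^ 2 / |(u : ℝ) - v| := by
      rw [hF, if_neg (by simp [hvu])]
      have e2 : |node k s i u - node k s i v| = s * |(u : ℝ) - v| := by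
        rw [node_pos u hi, node_pos v hi, ← abs_of_nonneg (by positivity : (0 : ℝ) ≤ s),
          ← abs_mul, abs_of_nonneg (by positivity : (0 : ℝ) ≤ s), ← abs_neg]
        congr 1; ring
      simp only
      rw [e2, div_le_div_iff₀ (by positivity) huv]
      have := abs_sub_node_le (s := s) hs hi hv
      calc _ ≤ 4 * s * k * (i : ℝ) ^ 2 * |(u : ℝ) - v| := by gcongr
        _ = _ := by ring
    calc _ ≤ 1 / (2 * s * (i : ℝ) ^ 2) * (4 * k * (i : ℝ) ^ 2 / |(u : ℝ) - v| * 4) := by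
          have := hF0 (i, v)
          gcongr
      _ = _ := by field_simp; norm_num

/-- The column bounds multiplied together, with `k = n + 1`. The factor `s ^ (-(n + 1))` is the
source of the exponential decay. -/
lemma basis_bound {n s M i u : ℕ} (hs : 1 ≤ s) (hi : i ≠ 0) (hM : i ≤ M) (hu : u ≤ n) :
    |(Lagrange.basis (Finset.range (M + 1) ×ˢ Finset.range (n + 1))
        (fun x : ℕ × ℕ => node (n + 1) s x.1 x.2) (i, u)).eval ((n + 1 : ℕ) : ℝ)|
      ≤ 2 / s * (8 * (n + 1 : ℕ) / s) ^ n * (1 / (i : ℝ) ^ 2)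
        * (1 / ((u.factorial : ℝ) * (n - u).factorial)) := by
  set k := n + 1 with hk
  set F : ℕ × ℕ → ℝ := fun y => if y = (i, u) then 1 else
      |(k : ℝ) - node k s y.1 y.2| / |node k s i u - node k s y.1 y.2| with hF
  have hF0 : ∀ y, 0 ≤ F y := fun y => by simp only [hF]; split_ifs <;> positivity
  have e1 : |(Lagrange.basis (Finset.range (M + 1) ×ˢ Finset.range k)
        (fun x : ℕ × ℕ => node k s x.1 x.2) (i, u)).eval (k : ℝ)|
      = ∏ y ∈ Finset.range (M + 1) ×ˢ Finset.range k, F y := by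
    rw [← Finset.prod_erase (a := (i, u)) _ (by simp [hF]), Lagrange.basis, Polynomial.eval_prod,
      Finset.abs_prod]
    refine Finset.prod_congr rfl fun y hy => ?_
    simp only [hF]
    rw [if_neg (Finset.ne_of_mem_erase hy)]
    simp [Lagrange.basisDivisor, abs_mul, abs_inv]
    ring
  rw [e1, Finset.prod_product_right]
  have huk : u < k := by omega
  refine (Finset.prod_le_prod (fun v _ => Finset.prod_nonneg fun l _ => hF0 _) fun v hv =>
    column_bound hs hi hM huk (Finset.mem_range.mp hv) F (fun y => rfl)).trans ?_
  rw [← Finset.mul_prod_erase _ _ (Finset.mem_range.mpr huk), if_pos rfl]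
  have e2 : ∏ v ∈ (Finset.range k).erase u,
      (if v = u then 2 / (s * (i : ℝ) ^ 2) else 8 * k / s / |(u : ℝ) - v|)
      = (8 * k / s) ^ n / (u.factorial * (n - u).factorial) := by
    rw [← prod_abs_sub n u hu, ← hk]
    have hc : ((Finset.range k).erase u).card = n := by
      rw [Finset.card_erase_of_mem (Finset.mem_range.mpr huk)]; simp [hk]
    rw [← hc, ← Finset.prod_const, ← Finset.prod_div_distrib]
    refine Finset.prod_congr rfl fun v hv => ?_
    rw [if_neg (Finset.ne_of_mem_erase hv)]
  rw [e2]
  apply le_of_eq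
  simp only [div_eq_mul_inv, mul_inv]
  ring

/-- Lagrange interpolation at the nodes of blocks `0, …, M`, with `k = n + 1`: a polynomial of degree
below the number of nodes that vanishes on block `0` and lies in `[0, 1]` on the other blocks is
exponentially small at `k`. -/
lemma eval_le_of_nodes {n s M : ℕ} (hs : 1 ≤ s) (p : Polynomial ℝ)
    (hdeg : p.natDegree < (M + 1) * (n + 1))
    (hz : ∀ v : ℕ, v < n + 1 → p.eval (v : ℝ) = 0)
    (hb : ∀ l v : ℕ, l ≠ 0 → l ≤ M → v < n + 1 →
      0 ≤ p.eval (node (n + 1) s l v) ∧ p.eval (node (n + 1) s l v) ≤ 1) :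
    p.eval ((n + 1 : ℕ) : ℝ) ≤ (48 / (s : ℝ)) ^ (n + 1) := by
  set S : Finset (ℕ × ℕ) := Finset.range (M + 1) ×ˢ Finset.range (n + 1) with hS
  set V : ℕ × ℕ → ℝ := fun x => node (n + 1) s x.1 x.2 with hV
  have hcard : S.card = (M + 1) * (n + 1) := by simp [hS]
  have hs' : (1 : ℝ) ≤ s := by exact_mod_cast hs
  have hdeg' : p.degree < S.card := by
    rw [hcard]
    exact lt_of_le_of_lt Polynomial.degree_le_natDegree (by exact_mod_cast hdeg)
  have hint := Lagrange.eq_interpolate (node_injOn (k := n + 1) (M := M) hs) hdeg'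
  have hev : p.eval ((n + 1 : ℕ) : ℝ)
      = ∑ x ∈ S, p.eval (V x) * (Lagrange.basis S V x).eval ((n + 1 : ℕ) : ℝ) := by
    conv_lhs => rw [hint]
    rw [Lagrange.interpolate_apply, Polynomial.eval_finsetSum]
    simp [hV, hS]
  have hterm : ∀ x ∈ S, p.eval (V x) * (Lagrange.basis S V x).eval ((n + 1 : ℕ) : ℝ)
      ≤ 2 / s * (8 * (n + 1 : ℕ) / s) ^ n * (1 / (x.1 : ℝ) ^ 2)
        * (1 / ((x.2.factorial : ℝ) * (n - x.2).factorial)) := by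
    rintro ⟨i, u⟩ hx
    simp only [hS, Finset.mem_product, Finset.mem_range] at hx
    rcases Nat.eq_zero_or_pos i with rfl | hi
    -- The right-hand side is `0` here because `1 / 0 ^ 2 = 0`; only its nonnegativity is used.
    · have : p.eval (V (0, u)) = 0 := by simp only [hV, node_zero]; exact hz u hx.2
      rw [this, zero_mul]; positivity
    · have h1 := hb i u hi.ne' (by omega) hx.2
      have h2 := basis_bound (n := n) hs hi.ne' (show i ≤ M by omega) (show u ≤ n by omega)
      refine le_trans ?_ h2
      refine le_trans (le_abs_self _) ?_
      rw [abs_mul, abs_of_nonneg h1.1]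
      exact mul_le_of_le_one_left (abs_nonneg _) h1.2
  rw [hev]
  refine (Finset.sum_le_sum hterm).trans ?_
  rw [hS, Finset.sum_product]
  simp only [← Finset.mul_sum]
  rw [sum_inv_factorial_mul, ← Finset.sum_mul, ← Finset.mul_sum]
  -- `k ^ k / k! ≤ e ^ k` absorbs the factorials.
  have hfac : ((n + 1 : ℕ) : ℝ) ^ (n + 1) / (n + 1).factorial ≤ 3 ^ (n + 1) := by
    refine (Real.pow_div_factorial_le_exp _ (by positivity) _).trans ?_
    rw [← mul_one ((n + 1 : ℕ) : ℝ), Real.exp_nat_mul]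
    gcongr
    exact Real.exp_one_lt_three.le
  calc _ ≤ 2 / s * (8 * (n + 1 : ℕ) / s) ^ n * 2 * (2 ^ n / n.factorial : ℝ) := by
        gcongr; exact sum_inv_sq_le_two M
    _ = 4 * 16 ^ n / (s : ℝ) ^ (n + 1) * (((n + 1 : ℕ) : ℝ) ^ (n + 1) / (n + 1).factorial) := by
        rw [Nat.factorial_succ, div_pow, mul_pow,
          show (16 : ℝ) ^ n = 8 ^ n * 2 ^ n by rw [← mul_pow]; norm_num]
        push_cast
        field_simp
        ring
    _ ≤ 16 * 16 ^ n / (s : ℝ) ^ (n + 1) * 3 ^ (n + 1) := by gcongr; norm_num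
    _ = _ := by
        rw [div_pow, show (48 : ℝ) ^ (n + 1) = 16 ^ (n + 1) * 3 ^ (n + 1) by
          rw [← mul_pow]; norm_num]
        ring

/-- **Polynomial core of the strong direct product theorem.**
For every `γ > 0` there exists `α > 0` such that for all positive integers
`k ≤ N`, every real polynomial `p` of degree at most `α·√(k·N)` with
`p(i) = 0` for all integers `0 ≤ i ≤ k-1` and `0 ≤ p(i) ≤ 1` for all
integers `0 ≤ i ≤ N` satisfies `p(k) ≤ 2^(-γ·k)`. -/
theorem sdpt_polynomial_core (γ : ℝ) (hγ : 0 < γ) :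
    ∃ α : ℝ, 0 < α ∧
      ∀ (k N : ℕ), 0 < k → k ≤ N →
        ∀ p : Polynomial ℝ,
          (p.natDegree : ℝ) ≤ α * Real.sqrt (k * N) →
          (∀ i : ℕ, i < k → p.eval (i : ℝ) = 0) →
          (∀ i : ℕ, i ≤ N → 0 ≤ p.eval (i : ℝ) ∧ p.eval (i : ℝ) ≤ 1) →
          p.eval (k : ℝ) ≤ (2 : ℝ) ^ (-(γ * k)) := by
  -- The spacing `s` is chosen so that `48 / s ≤ 2 ^ (-γ)`.
  obtain ⟨s, hs⟩ := exists_nat_ge (48 * (2 : ℝ) ^ γ)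
  have hspos : (0 : ℝ) < s := lt_of_lt_of_le (by positivity) hs
  have hs1 : 1 ≤ s := by exact_mod_cast hspos
  refine ⟨1 / Real.sqrt (4 * s), by positivity, ?_⟩
  intro k N hk _ p hdeg hz hb
  have hkR : (0 : ℝ) < k := by exact_mod_cast hk
  -- The largest number of blocks that fits into `[0, N]`.
  set M := Nat.sqrt (N / (4 * s * k)) with hM
  have hpos : 0 < 4 * s * k := by positivity
  have hMN : 4 * s * k * M ^ 2 ≤ N := by
    have h1 : M ^ 2 ≤ N / (4 * s * k) := Nat.sqrt_le' _
    calc _ ≤ 4 * s * k * (N / (4 * s * k)) := by gcongr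
      _ ≤ N := Nat.mul_div_le _ _
  have hNM : N < 4 * s * k * (M + 1) ^ 2 := by
    have h1 : N / (4 * s * k) < (M + 1) ^ 2 := Nat.lt_succ_sqrt' _
    rw [Nat.div_lt_iff_lt_mul hpos] at h1
    linarith
  have hd : p.natDegree < (M + 1) * k := by
    have h1 : Real.sqrt (k * N) < Real.sqrt (4 * s) * (k * (M + 1)) := by
      rw [Real.sqrt_lt' (by positivity), mul_pow, Real.sq_sqrt (by positivity)]
      have : (N : ℝ) < 4 * s * k * (M + 1) ^ 2 := by exact_mod_cast hNM
      nlinarith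
    have h2 : (p.natDegree : ℝ) < k * (M + 1) := by
      refine hdeg.trans_lt ?_
      rw [one_div_mul_eq_div, div_lt_iff₀ (by positivity)]
      linarith
    have h3 : p.natDegree < k * (M + 1) := by exact_mod_cast h2
    linarith
  obtain ⟨n, rfl⟩ : ∃ n, k = n + 1 := ⟨k - 1, by omega⟩
  refine (eval_le_of_nodes hs1 p hd hz ?_).trans ?_
  · intro l v hl hlM hv
    have h1 : s * v ≤ 4 * s * (n + 1) * l ^ 2 := by
      have : 1 ≤ l ^ 2 := Nat.one_le_pow _ _ (Nat.pos_of_ne_zero hl)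
      calc s * v ≤ (4 * s) * (n + 1) * 1 := by nlinarith
        _ ≤ _ := by gcongr
    have h2 : node (n + 1) s l v = ((4 * s * (n + 1) * l ^ 2 - s * v : ℕ) : ℝ) := by
      rw [node_pos v hl, Nat.cast_sub h1]; push_cast; ring
    rw [h2]
    apply hb
    refine (Nat.sub_le _ _).trans (le_trans ?_ hMN)
    gcongr
  · have h1 : 48 / (s : ℝ) ≤ (2 : ℝ) ^ (-γ) := by
      rw [Real.rpow_neg (by norm_num), div_le_iff₀ hspos, inv_mul_eq_div, le_div_iff₀ (by positivity)]
      exact hs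
    calc (48 / (s : ℝ)) ^ (n + 1) ≤ ((2 : ℝ) ^ (-γ)) ^ (n + 1) := by gcongr
      _ = _ := by rw [← Real.rpow_natCast, ← Real.rpow_mul (by norm_num), neg_mul]
end

section
/- There exist real constants a, b > 0 such that for every integer n ≥ 1, every real polynomial p of degree d ≤ n satisfying |p(i)| ≤ 1 for all integers i ∈ {0, 1, …, n} also satisfies |p(x)| ≤ a·e^{b·d²/n} for all real x ∈ [0, n]. -/
/-!
Let `D = d² / n`, `M = max |p|` on `[0, n]`, and let `x ∈ [0, n]`. Take `m + 1` consecutive integers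
of `[0, n]` surrounding `x`, with `m` about `16 D`, and let `I` be the interpolant of `p` there and
`ω` the nodal polynomial. The values of `I` within `5 m` of the nodes are at most `exp (10 m)`
(`norm_eval_le_of_nodes`), since `p` is bounded by `1` at the nodes.

The Bernstein–Walsh inequality (`norm_pow_mul_eval_le`, `norm_eval_le_near`) bounds `p` by
`M * exp (4 d √(m / n)) ≤ M * exp m` on the circle of radius `4 m` about `x`. There
`|ω| ≥ (3 m) ^ (m + 1)`, whereas `|ω x| ≤ m ^ (m + 1)`, so the maximum principle applied to the
polynomial `(p - I) / ω` gives `|p x - I x| ≤ 3 ^ (-(m + 1)) * (M * exp m + exp (10 m))`. As `e < 3`,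
the coefficient of `M` is at most `1 / 3`; choosing `x` to be a maximum point of `|p|` absorbs it and
yields `M ≤ 2 * exp (10 m)` (`abs_eval_le_of_bound`, `abs_eval_le_of_deg`).

If `[0, n]` has too few integers for this, then `n ≤ m`, and interpolation at all of them gives the
bound `exp (2 n) ≤ exp (2 m)` directly (`abs_eval_le_of_natDegree_le`).
-/

open Polynomial

namespace CoppersmithRivlin

/-- The denominator of the `j`-th Lagrange basis polynomial at the nodes `0, …, j + k`. -/
lemma prod_erase_abs_sub (j k : ℕ) :
    ∏ i ∈ (Finset.range (j + k + 1)).erase j, |(j : ℝ) - i| = j.factorial * k.factorial := by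
  have h1 : ∏ i ∈ (Finset.range (j + k + 1)).erase j, |(j : ℝ) - i|
      = ∏ i ∈ Finset.range (j + 1 + k), if i = j then (1 : ℝ) else |(j : ℝ) - i| := by
    rw [show j + k + 1 = j + 1 + k by ring,
      ← Finset.mul_prod_erase (Finset.range (j + 1 + k)) _ (a := j) (by simp; omega)]
    rw [if_pos rfl, one_mul]
    refine Finset.prod_congr rfl fun i hi => ?_
    rw [if_neg (Finset.ne_of_mem_erase hi)]
  rw [h1, Finset.prod_range_add, Finset.prod_range_succ, if_pos rfl, mul_one]
  congr 1
  · rw [← Finset.prod_range_reflect, ← Finset.prod_range_add_one_eq_factorial]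
    push_cast
    refine Finset.prod_congr rfl fun i hi => ?_
    have hi : i < j := Finset.mem_range.1 hi
    rw [if_neg (by omega), Nat.cast_sub (by omega), Nat.cast_sub (by omega), abs_of_nonneg]
    · push_cast; ring
    · push_cast; linarith [(Nat.cast_nonneg i : (0 : ℝ) ≤ i)]
  · rw [← Finset.prod_range_add_one_eq_factorial]
    push_cast
    refine Finset.prod_congr rfl fun i hi => ?_
    rw [if_neg (by omega), abs_sub_comm, abs_of_nonneg]
    · ring
    · linarith [(Nat.cast_nonneg i : (0 : ℝ) ≤ i)]

/-- Lagrange interpolation at `m + 1` consecutive integers, all within `L` of `z`: each basis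
polynomial is at most `L ^ m / (j! (m - j)!)`, and these sum to `(2 * L) ^ m / m!`. -/
lemma norm_eval_le_of_nodes (P : ℂ[X]) (s m : ℕ) (hdeg : P.degree < ((m + 1 : ℕ) : WithBot ℕ))
    (hP : ∀ i ≤ m, ‖P.eval ((s : ℂ) + i)‖ ≤ 1) (z : ℂ) (L : ℝ)
    (hz : ∀ i ≤ m, ‖z - (s + i)‖ ≤ L) : ‖P.eval z‖ ≤ Real.exp (2 * L) := by
  have hL : 0 ≤ L := (norm_nonneg _).trans (hz 0 (Nat.zero_le _))
  have hinj : Set.InjOn (fun i : ℕ => (s : ℂ) + i) (Finset.range (m + 1)) := by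
    intro a _ b _ h
    simpa using h
  have hb : ∀ j ∈ Finset.range (m + 1),
      ‖(Lagrange.basis (Finset.range (m + 1)) (fun i : ℕ => (s : ℂ) + i) j).eval z‖
        ≤ L ^ m / m.factorial * m.choose j := by
    intro j hj
    have hjm : j ≤ m := by simpa [Nat.lt_succ_iff] using hj
    obtain ⟨k, rfl⟩ := Nat.exists_eq_add_of_le hjm
    have h1 : (Lagrange.basis (Finset.range (j + k + 1)) (fun i : ℕ => (s : ℂ) + i) j).eval z
        = ∏ i ∈ (Finset.range (j + k + 1)).erase j, ((z - (s + i)) / ((j : ℂ) - i)) := by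
      rw [Lagrange.basis, Polynomial.eval_prod]
      refine Finset.prod_congr rfl fun i _ => ?_
      simp [Lagrange.basisDivisor]
      ring
    have h2 : ∏ i ∈ (Finset.range (j + k + 1)).erase j, ‖(j : ℂ) - i‖
        = j.factorial * k.factorial := by
      rw [← prod_erase_abs_sub]
      refine Finset.prod_congr rfl fun i _ => ?_
      rw [← Real.norm_eq_abs, ← Complex.norm_real]
      push_cast
      rfl
    have h3 : ∏ i ∈ (Finset.range (j + k + 1)).erase j, ‖z - (s + i)‖ ≤ L ^ (j + k) := by
      calc _ ≤ ∏ i ∈ (Finset.range (j + k + 1)).erase j, L := by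
            refine Finset.prod_le_prod (fun _ _ => norm_nonneg _) fun i hi => hz i ?_
            have := Finset.mem_range.1 (Finset.mem_of_mem_erase hi)
            omega
        _ = L ^ (j + k) := by
            rw [Finset.prod_const, Finset.card_erase_of_mem hj]
            simp
    rw [h1, norm_prod]
    simp_rw [norm_div]
    rw [Finset.prod_div_distrib, h2, Nat.cast_choose ℝ hjm, Nat.add_sub_cancel_left]
    have e : L ^ (j + k) / ((j + k).factorial : ℝ) * (((j + k).factorial : ℝ) /
        (j.factorial * k.factorial)) = L ^ (j + k) / (j.factorial * k.factorial) := by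
      field_simp
    rw [e]
    gcongr
  have hPe := Lagrange.eq_interpolate (f := P) hinj (by simpa using hdeg)
  rw [hPe, Lagrange.interpolate_apply, Polynomial.eval_finsetSum]
  calc _ ≤ ∑ j ∈ Finset.range (m + 1), L ^ m / m.factorial * m.choose j := by
        refine norm_sum_le_of_le _ fun j hj => ?_
        rw [eval_mul, eval_C, norm_mul]
        have h1 := hP j (by simpa [Nat.lt_succ_iff] using hj)
        calc _ ≤ 1 * _ := mul_le_mul_of_nonneg_right h1 (norm_nonneg _)
          _ ≤ _ := by rw [one_mul]; exact hb j hj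
    _ = (2 * L) ^ m / m.factorial := by
        rw [← Finset.mul_sum, ← Nat.cast_sum, Nat.sum_range_choose, mul_pow]
        push_cast
        ring
    _ ≤ Real.exp (2 * L) := Real.pow_div_factorial_le_exp _ (by positivity) _

/-- The Joukowsky map, normalized to send the unit circle onto `[0, 1]`, is onto: its inverse image
of `c` can be taken in the closed punctured unit disc. -/
lemma exists_joukowsky (c : ℂ) : ∃ w : ℂ, w ≠ 0 ∧ ‖w‖ ≤ 1 ∧ (w + 1) ^ 2 = 4 * c * w := by
  obtain ⟨θ, hθ⟩ := Complex.cos_surjective (2 * c - 1)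
  have h0 := Complex.exp_ne_zero (θ * Complex.I)
  have h : (Complex.exp (θ * Complex.I) + 1) ^ 2 = 4 * c * Complex.exp (θ * Complex.I) := by
    rw [Complex.cos, neg_mul, Complex.exp_neg] at hθ
    field_simp at hθ
    linear_combination hθ
  generalize Complex.exp (θ * Complex.I) = w at h h0
  rcases le_total ‖w‖ 1 with hw | hw
  · exact ⟨w, h0, hw, h⟩
  · refine ⟨w⁻¹, inv_ne_zero h0, ?_, ?_⟩
    · rw [norm_inv]; exact inv_le_one_of_one_le₀ hw
    · field_simp
      linear_combination h

/-- The Bernstein–Walsh inequality in the Joukowsky variable: if `(w + 1) ^ 2 * n / 4 = z * w`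
with `‖w‖ ≤ 1`, then `w ^ d * p z` is a polynomial in `w`, bounded by `M` on the unit circle because
the circle is mapped into `[0, n]`. -/
lemma norm_pow_mul_eval_le (p : ℝ[X]) (n : ℝ) (hn : 0 < n) (M : ℝ)
    (hM : ∀ x : ℝ, 0 ≤ x → x ≤ n → |p.eval x| ≤ M) (z w : ℂ) (hw : ‖w‖ ≤ 1)
    (hzw : (w + 1) ^ 2 * (n / 4) = z * w) :
    ‖w‖ ^ p.natDegree * ‖(p.map (algebraMap ℝ ℂ)).eval z‖ ≤ M := by
  let Q : ℂ → ℂ := fun w => ∑ k ∈ Finset.range (p.natDegree + 1),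
    (p.coeff k : ℂ) * ((w + 1) ^ 2 * (n / 4)) ^ k * w ^ (p.natDegree - k)
  have hQ : ∀ w z : ℂ, (w + 1) ^ 2 * (n / 4) = z * w →
      Q w = w ^ p.natDegree * (p.map (algebraMap ℝ ℂ)).eval z := by
    intro w z h
    rw [Polynomial.eval_eq_sum_range, Finset.mul_sum, Polynomial.natDegree_map]
    refine Finset.sum_congr rfl fun k hk => ?_
    have hk : k ≤ p.natDegree := by simpa [Nat.lt_succ_iff] using hk
    rw [h, mul_pow, Polynomial.coeff_map, ← pow_sub_mul_pow w hk]
    simp only [Complex.coe_algebraMap]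
    ring
  have hmax : ‖Q w‖ ≤ M := by
    refine Complex.norm_le_of_forall_mem_frontier_norm_le (U := Metric.ball 0 1)
      Metric.isBounded_ball ?_ ?_ ?_
    · apply Differentiable.diffContOnCl
      fun_prop
    · intro u hu
      rw [frontier_ball _ one_ne_zero, mem_sphere_zero_iff_norm] at hu
      have hsq : u.re ^ 2 + u.im ^ 2 = 1 := by
        have := Complex.sq_norm u
        rw [hu, Complex.normSq_apply] at this
        nlinarith
      have hu' : (u + 1) ^ 2 * (n / 4) = ((n / 2 * (1 + u.re) : ℝ) : ℂ) * u := by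
        apply Complex.ext
        · simp [pow_two]
          linear_combination (-n / 4) * hsq
        · simp [pow_two]
          ring
      rw [hQ u _ hu', norm_mul, norm_pow, hu, one_pow, one_mul, ← Complex.coe_algebraMap,
        Polynomial.eval_map_algebraMap, Polynomial.aeval_algebraMap_apply]
      simp only [Polynomial.coe_aeval_eq_eval, Complex.coe_algebraMap, Complex.norm_real,
        Real.norm_eq_abs]
      have hre : |u.re| ≤ 1 := hu ▸ Complex.abs_re_le_norm u
      obtain ⟨h1, h2⟩ := abs_le.1 hre
      apply hM <;> nlinarith
    · rw [closure_ball _ one_ne_zero]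
      simpa using hw
  rwa [hQ w z hzw, norm_mul, norm_pow] at hmax

lemma le_exp_of_add_inv_le {r s : ℝ} (hr : 0 < r) (hs : 0 ≤ s) (h : r + r⁻¹ ≤ 2 + s ^ 2) :
    r ≤ Real.exp s := by
  have h1 : 2 + s ^ 2 ≤ Real.exp s + (Real.exp s)⁻¹ := by
    have h2 := Real.cosh_two_mul (s / 2)
    have h3 := Real.cosh_sq (s / 2)
    have h4 := Real.self_le_sinh_iff.2 (show 0 ≤ s / 2 by positivity)
    have h5 := Real.cosh_eq s
    rw [mul_div_cancel₀ s two_ne_zero] at h2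
    rw [← Real.exp_neg]
    nlinarith
  by_contra! hlt
  have he : 1 ≤ Real.exp s := Real.one_le_exp hs
  have h6 : (r - Real.exp s) * (1 - (r * Real.exp s)⁻¹) ≤ 0 := by
    have : (r - Real.exp s) * (1 - (r * Real.exp s)⁻¹)
        = r + r⁻¹ - (Real.exp s + (Real.exp s)⁻¹) := by
      field_simp
      ring
    linarith
  have h7 : (r * Real.exp s)⁻¹ < 1 := inv_lt_one_of_one_lt₀ (by nlinarith)
  nlinarith [mul_pos (sub_pos.2 hlt) (sub_pos.2 h7)]

/-- A polynomial bounded by `M` on `[0, n]` grows at most by `exp (d * s)`, where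
`s ^ 2 = 4 * R / n`, at distance at most `R` from a point of `[0, n]`. -/
lemma norm_eval_le_near (p : ℝ[X]) (n : ℝ) (hn : 0 < n) (M : ℝ)
    (hM : ∀ x : ℝ, 0 ≤ x → x ≤ n → |p.eval x| ≤ M) (x R s : ℝ) (hx0 : 0 ≤ x) (hxn : x ≤ n)
    (hs : 0 ≤ s) (hsR : s ^ 2 = 4 * R / n) (z : ℂ) (hz : ‖z - x‖ ≤ R) :
    ‖(p.map (algebraMap ℝ ℂ)).eval z‖ ≤ M * Real.exp (p.natDegree * s) := by
  obtain ⟨w, hw0, hw1, hw⟩ := exists_joukowsky (z / n)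
  have hnC : (n : ℂ) ≠ 0 := by exact_mod_cast hn.ne'
  have hzw : (w + 1) ^ 2 * (n / 4) = z * w := by
    rw [hw]; field_simp
  have hzw' : (w - 1) ^ 2 * (n / 4) = (z - n) * w := by
    linear_combination hzw
  have hwp : 0 < ‖w‖ := norm_pos_iff.2 hw0
  have e1 : ‖w + 1‖ ^ 2 * (n / 4) = ‖z‖ * ‖w‖ := by
    have := congrArg norm hzw
    simpa [abs_of_pos hn] using this
  have e2 : ‖w - 1‖ ^ 2 * (n / 4) = ‖z - n‖ * ‖w‖ := by
    have := congrArg norm hzw'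
    simpa [abs_of_pos hn] using this
  have e3 : ‖w + 1‖ ^ 2 + ‖w - 1‖ ^ 2 = 2 * (‖w‖ ^ 2 + 1) := by
    have := parallelogram_law_with_norm ℝ w 1
    rw [norm_one] at this
    nlinarith
  have b1 : ‖z‖ ≤ R + x := by
    calc ‖z‖ = ‖(z - x) + x‖ := by ring_nf
      _ ≤ ‖z - x‖ + ‖(x : ℂ)‖ := norm_add_le _ _
      _ ≤ R + x := by rw [Complex.norm_real, Real.norm_eq_abs, abs_of_nonneg hx0]; linarith
  have b2 : ‖z - n‖ ≤ R + (n - x) := by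
    calc ‖z - n‖ = ‖(z - x) + ((x - n : ℝ) : ℂ)‖ := by push_cast; ring_nf
      _ ≤ ‖z - x‖ + ‖((x - n : ℝ) : ℂ)‖ := norm_add_le _ _
      _ ≤ R + (n - x) := by
        rw [Complex.norm_real, Real.norm_eq_abs, abs_of_nonpos (by linarith)]; linarith
  have hr : ‖w‖⁻¹ ≤ Real.exp s := by
    refine le_exp_of_add_inv_le (inv_pos.2 hwp) hs ?_
    rw [inv_inv, hsR]
    -- `n / 2 * (‖w‖ + ‖w‖⁻¹) = ‖z‖ + ‖z - n‖`: circles are mapped to ellipses with foci `0`, `n`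
    have e4 : ‖w‖⁻¹ + ‖w‖ = 2 * (‖z‖ + ‖z - n‖) / n := by
      field_simp
      linear_combination (-n / 2) * e3 + 2 * e1 + 2 * e2
    rw [e4, show 2 + 4 * R / n = 2 * ((R + x) + (R + (n - x))) / n by field_simp; ring]
    gcongr
  have hmain := norm_pow_mul_eval_le p n hn M hM z w hw1 hzw
  have hM0 : 0 ≤ M := (abs_nonneg _).trans (hM 0 le_rfl hn.le)
  calc _ = (‖w‖ ^ p.natDegree * ‖(p.map (algebraMap ℝ ℂ)).eval z‖) * (‖w‖⁻¹) ^ p.natDegree := by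
        rw [inv_pow]; field_simp
    _ ≤ M * (Real.exp s) ^ p.natDegree := by gcongr
    _ = _ := by rw [← Real.exp_nat_mul]

lemma eval_map_ofReal (p : ℝ[X]) (x : ℝ) :
    (p.map (algebraMap ℝ ℂ)).eval (x : ℂ) = ((p.eval x : ℝ) : ℂ) := by
  rw [← Complex.coe_algebraMap, Polynomial.eval_map_algebraMap,
    Polynomial.aeval_algebraMap_apply]
  simp

/-- One step of self-improvement of the bound `M`. The polynomial is compared with its interpolant
`I` at `m + 1` consecutive integers surrounding `x`; the quotient `(p - I) / ω`, with `ω` the nodal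
polynomial, is estimated through the maximum principle on the circle of radius `4 * m` about `x`. -/
lemma abs_eval_le_of_bound (n : ℕ) (hn : 1 ≤ n) (p : ℝ[X])
    (hp : ∀ i : ℕ, i ≤ n → |p.eval (i : ℝ)| ≤ 1) (M : ℝ)
    (hM : ∀ x : ℝ, 0 ≤ x → x ≤ n → |p.eval x| ≤ M) (m : ℕ) (hm1 : 1 ≤ m) (hmn : m ≤ n)
    (hmd : 16 * (p.natDegree : ℝ) ^ 2 ≤ m * n) (x : ℝ) (hx0 : 0 ≤ x) (hxn : x ≤ n) :
    |p.eval x| ≤ (1 / 3) * M + (4 / 3) * Real.exp (10 * m) := by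
  have hn0 : (0 : ℝ) < n := by exact_mod_cast hn
  have hm0 : (0 : ℝ) < m := by exact_mod_cast hm1
  have hM0 : 0 ≤ M := (abs_nonneg _).trans (hM 0 le_rfl hn0.le)
  obtain ⟨s, hsn, hsx, hxs⟩ : ∃ s : ℕ, s + m ≤ n ∧ (s : ℝ) ≤ x ∧ x ≤ s + m := by
    rcases le_total (⌊x⌋₊ + m) n with h | h
    · refine ⟨⌊x⌋₊, h, Nat.floor_le hx0, ?_⟩
      have := (Nat.lt_floor_add_one x).le
      have : (1 : ℝ) ≤ m := by exact_mod_cast hm1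
      linarith
    · refine ⟨n - m, by omega, ?_, ?_⟩
      · have h1 : n - m ≤ ⌊x⌋₊ := by omega
        exact (Nat.cast_le.2 h1).trans (Nat.floor_le hx0)
      · rw [Nat.cast_sub hmn]; linarith
  set P : ℂ[X] := p.map (algebraMap ℝ ℂ) with hPdef
  set ω : ℂ[X] := Lagrange.nodal (Finset.range (m + 1)) (fun i : ℕ => (s : ℂ) + i) with hω
  have hmonic : ω.Monic := Lagrange.nodal_monic
  set I := P %ₘ ω
  set q := P /ₘ ω
  have hdiv : I + ω * q = P := Polynomial.modByMonic_add_div P ω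
  have hIdeg : I.degree < ((m + 1 : ℕ) : WithBot ℕ) := by
    have h1 := Polynomial.degree_modByMonic_lt P hmonic
    rwa [hω, Lagrange.degree_nodal, Finset.card_range] at h1
  have hevω : ∀ z, ω.eval z = ∏ i ∈ Finset.range (m + 1), (z - (s + i)) := fun z =>
    Lagrange.eval_nodal
  have hInode : ∀ i ≤ m, ‖I.eval ((s : ℂ) + i)‖ ≤ 1 := by
    intro i hi
    have h0 : ω.eval ((s : ℂ) + i) = 0 :=
      Lagrange.eval_nodal_at_node (v := fun i : ℕ => (s : ℂ) + i)
        (Finset.mem_range.2 (Nat.lt_succ_of_le hi))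
    have h1 : I.eval ((s : ℂ) + i) = P.eval ((s : ℂ) + i) := by
      rw [← hdiv, eval_add, eval_mul, h0, zero_mul, add_zero]
    rw [h1, show ((s : ℂ) + i) = (((s + i : ℕ) : ℝ) : ℂ) by push_cast; rfl, hPdef,
      eval_map_ofReal, Complex.norm_real]
    exact hp _ (by omega)
  have hxnode : ∀ i ≤ m, ‖(x : ℂ) - (s + i)‖ ≤ m := by
    intro i hi
    have hi' : (i : ℝ) ≤ m := by exact_mod_cast hi
    have hi0 : (0 : ℝ) ≤ i := Nat.cast_nonneg i
    rw [show (x : ℂ) - (s + i) = ((x - (s + i) : ℝ) : ℂ) by push_cast; rfl, Complex.norm_real,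
      Real.norm_eq_abs, abs_le]
    constructor <;> linarith
  have hIx : ‖I.eval (x : ℂ)‖ ≤ Real.exp (10 * m) := by
    refine (norm_eval_le_of_nodes I s m hIdeg hInode x m hxnode).trans ?_
    apply Real.exp_le_exp.2
    linarith
  have hcirc : ∀ z ∈ Metric.sphere (x : ℂ) (4 * m),
      ‖q.eval z‖ ≤ (M * Real.exp m + Real.exp (10 * m)) / (3 * m) ^ (m + 1) := by
    intro z hz
    rw [mem_sphere_iff_norm] at hz
    have hIz : ‖I.eval z‖ ≤ Real.exp (10 * m) := by
      have h1 := norm_eval_le_of_nodes I s m hIdeg hInode z (5 * m) fun i hi => by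
        calc ‖z - (s + i)‖ = ‖(z - x) + (x - (s + i))‖ := by ring_nf
          _ ≤ ‖z - x‖ + ‖(x : ℂ) - (s + i)‖ := norm_add_le _ _
          _ ≤ 5 * m := by linarith [hxnode i hi]
      rwa [show 2 * (5 * (m : ℝ)) = 10 * m by ring] at h1
    have hPz : ‖P.eval z‖ ≤ M * Real.exp m := by
      refine (norm_eval_le_near p n hn0 M hM x (4 * m) (4 * √(m / n)) hx0 hxn (by positivity)
        ?_ z hz.le).trans ?_
      · rw [mul_pow, Real.sq_sqrt (by positivity)]; ring
      · gcongr
        refine (pow_le_pow_iff_left₀ (by positivity) hm0.le two_ne_zero).1 ?_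
        rw [mul_pow, mul_pow, Real.sq_sqrt (by positivity)]
        calc (p.natDegree : ℝ) ^ 2 * (4 ^ 2 * ((m : ℝ) / n))
            = (16 * (p.natDegree : ℝ) ^ 2) * ((m : ℝ) / n) := by ring
          _ ≤ ((m : ℝ) * n) * ((m : ℝ) / n) := by gcongr
          _ = (m : ℝ) ^ 2 := by field_simp
    have hωz : (3 * m : ℝ) ^ (m + 1) ≤ ‖ω.eval z‖ := by
      rw [hevω, norm_prod]
      calc (3 * m : ℝ) ^ (m + 1) = ∏ i ∈ Finset.range (m + 1), (3 * m : ℝ) := by simp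
        _ ≤ _ := by
          refine Finset.prod_le_prod (fun _ _ => by positivity) fun i hi => ?_
          have h1 := hxnode i (Nat.lt_succ_iff.1 (Finset.mem_range.1 hi))
          have h2 : ‖z - x‖ ≤ ‖z - (s + i)‖ + ‖(x : ℂ) - (s + i)‖ := by
            calc ‖z - x‖ = ‖(z - (s + i)) - (x - (s + i))‖ := by ring_nf
              _ ≤ _ := norm_sub_le _ _
          linarith
    rw [le_div_iff₀ (by positivity)]
    calc ‖q.eval z‖ * (3 * m) ^ (m + 1) ≤ ‖q.eval z‖ * ‖ω.eval z‖ := by gcongr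
      _ = ‖P.eval z - I.eval z‖ := by
        rw [← norm_mul, ← hdiv, eval_add, eval_mul]; ring_nf
      _ ≤ ‖P.eval z‖ + ‖I.eval z‖ := norm_sub_le _ _
      _ ≤ _ := by gcongr
  have hqx : ‖q.eval (x : ℂ)‖ ≤ (M * Real.exp m + Real.exp (10 * m)) / (3 * m) ^ (m + 1) := by
    refine Complex.norm_le_of_forall_mem_frontier_norm_le (U := Metric.ball (x : ℂ) (4 * m))
      (f := fun z => q.eval z) Metric.isBounded_ball ?_ ?_ ?_
    · exact q.differentiable.diffContOnCl
    · rwa [frontier_ball _ (by positivity)]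
    · exact subset_closure (Metric.mem_ball_self (by positivity))
  have hωx : ‖ω.eval (x : ℂ)‖ ≤ (m : ℝ) ^ (m + 1) := by
    rw [hevω, norm_prod]
    calc _ ≤ ∏ i ∈ Finset.range (m + 1), (m : ℝ) :=
          Finset.prod_le_prod (fun _ _ => norm_nonneg _) fun i hi =>
            hxnode i (Nat.lt_succ_iff.1 (Finset.mem_range.1 hi))
      _ = _ := by simp
  have hexp3 : Real.exp m ≤ 3 ^ m := by
    rw [← Real.exp_one_pow]
    gcongr
    exact Real.exp_one_lt_three.le
  have h3 : (1 : ℝ) ≤ 3 ^ m := one_le_pow₀ (by norm_num)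
  rw [← Real.norm_eq_abs, ← Complex.norm_real, ← eval_map_ofReal, ← hPdef, ← hdiv, eval_add,
    eval_mul]
  calc _ ≤ ‖I.eval (x : ℂ)‖ + ‖ω.eval (x : ℂ)‖ * ‖q.eval (x : ℂ)‖ := by
        rw [← norm_mul]; exact norm_add_le _ _
    _ ≤ Real.exp (10 * m) + (m : ℝ) ^ (m + 1) *
        ((M * Real.exp m + Real.exp (10 * m)) / (3 * m) ^ (m + 1)) := by gcongr
    _ ≤ Real.exp (10 * m) + (m : ℝ) ^ (m + 1) *
        ((M * 3 ^ m + Real.exp (10 * m) * 3 ^ m) / (3 * m) ^ (m + 1)) := by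
        gcongr
        exact le_mul_of_one_le_right (Real.exp_pos _).le h3
    _ = _ := by
        rw [mul_pow, pow_succ (3 : ℝ) m]
        field_simp
        ring

/-- At a maximum point of `|p|` the term `M / 3` of `abs_eval_le_of_bound` is absorbed into `M`. -/
lemma abs_eval_le_of_deg (n : ℕ) (hn : 1 ≤ n) (p : ℝ[X])
    (hp : ∀ i : ℕ, i ≤ n → |p.eval (i : ℝ)| ≤ 1) (m : ℕ) (hm1 : 1 ≤ m) (hmn : m ≤ n)
    (hmd : 16 * (p.natDegree : ℝ) ^ 2 ≤ m * n) (x : ℝ) (hx0 : 0 ≤ x) (hxn : x ≤ n) :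
    |p.eval x| ≤ 2 * Real.exp (10 * m) := by
  obtain ⟨y, hy, hmax⟩ := isCompact_Icc.exists_isMaxOn (s := Set.Icc (0 : ℝ) n)
    ⟨x, hx0, hxn⟩ (f := fun t => |p.eval t|) (by fun_prop)
  have hM : ∀ t : ℝ, 0 ≤ t → t ≤ n → |p.eval t| ≤ |p.eval y| := fun t h0 h1 => hmax ⟨h0, h1⟩
  have h := abs_eval_le_of_bound n hn p hp _ hM m hm1 hmn hmd y hy.1 hy.2
  linarith [hM x hx0 hxn]

/-- The bound from interpolation at all integer points of `[0, n]`, suited to large degree. -/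
lemma abs_eval_le_of_natDegree_le (n : ℕ) (p : ℝ[X]) (hd : p.natDegree ≤ n)
    (hp : ∀ i : ℕ, i ≤ n → |p.eval (i : ℝ)| ≤ 1) (x : ℝ) (hx0 : 0 ≤ x) (hxn : x ≤ n) :
    |p.eval x| ≤ Real.exp (2 * n) := by
  rw [← Real.norm_eq_abs, ← Complex.norm_real, ← eval_map_ofReal]
  refine norm_eval_le_of_nodes _ 0 n ?_ ?_ _ _ ?_
  · refine lt_of_le_of_lt Polynomial.degree_map_le ?_
    refine lt_of_le_of_lt Polynomial.degree_le_natDegree ?_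
    exact_mod_cast Nat.lt_succ_of_le hd
  · intro i hi
    rw [show (((0 : ℕ) : ℂ) + i) = ((i : ℝ) : ℂ) by simp, eval_map_ofReal, Complex.norm_real]
    exact hp i hi
  · intro i hi
    have hi' : (i : ℝ) ≤ n := by exact_mod_cast hi
    have hi0 : (0 : ℝ) ≤ i := Nat.cast_nonneg i
    rw [show (x : ℂ) - ((0 : ℕ) + i) = ((x - i : ℝ) : ℂ) by simp, Complex.norm_real,
      Real.norm_eq_abs, abs_le]
    constructor <;> linarith

end CoppersmithRivlin



/-- **Coppersmith–Rivlin bound.** There exist constants `a, b > 0` such that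
every real polynomial `p` of degree `d ≤ n` with `|p(i)| ≤ 1` at all integers
`0 ≤ i ≤ n` satisfies `|p(x)| ≤ a·e^(b·d²/n)` for all real `x ∈ [0, n]`. -/
theorem coppersmith_rivlin :
    ∃ a b : ℝ, 0 < a ∧ 0 < b ∧
      ∀ (n : ℕ), 1 ≤ n →
        ∀ p : Polynomial ℝ, p.natDegree ≤ n →
          (∀ i : ℕ, i ≤ n → |p.eval (i : ℝ)| ≤ 1) →
          ∀ x : ℝ, 0 ≤ x → x ≤ n →
            |p.eval x| ≤ a * Real.exp (b * (p.natDegree : ℝ) ^ 2 / n) := by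
  refine ⟨2 * Real.exp 20, 160, by positivity, by norm_num, ?_⟩
  intro n hn p hd hp x hx0 hxn
  have hn0 : (0 : ℝ) < n := by exact_mod_cast hn
  set D : ℝ := 16 * (p.natDegree : ℝ) ^ 2 / n with hD
  have hD0 : 0 ≤ D := by positivity
  -- the number of nodes; adding `1` keeps `1 ≤ m` when the degree is zero
  set m : ℕ := ⌈D⌉₊ + 1 with hm
  have hmle : (m : ℝ) ≤ D + 2 := by
    have := (Nat.ceil_lt_add_one hD0).le
    rw [hm]; push_cast; linarith
  have hDm : D ≤ m := by
    have := Nat.le_ceil D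
    rw [hm]; push_cast; linarith
  have key : |p.eval x| ≤ 2 * Real.exp (10 * m) := by
    rcases le_total m n with h | h
    · refine CoppersmithRivlin.abs_eval_le_of_deg n hn p hp m (by omega) h ?_ x hx0 hxn
      rwa [hD, div_le_iff₀ hn0] at hDm
    · have h' : (n : ℝ) ≤ m := by exact_mod_cast h
      have h1 := CoppersmithRivlin.abs_eval_le_of_natDegree_le n p hd hp x hx0 hxn
      have h2 : Real.exp (2 * n) ≤ Real.exp (10 * m) := Real.exp_le_exp.2 (by linarith)
      linarith [Real.exp_pos (10 * m)]
  refine key.trans ?_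
  rw [mul_assoc, ← Real.exp_add]
  gcongr
  rw [show 160 * (p.natDegree : ℝ) ^ 2 / n = 10 * D by rw [hD]; ring]
  linarith
end

section
/- There exists a real constant c > 0 such that for all integers N and k with 2 ≤ k and k·log N ≤ c·N (so in particular N/(6k) ≥ 1), there exist subsets A_1, …, A_N of {1, …, N}, each of size ⌊N/(2k)⌋, with the following property: for every set I ⊆ {1, …, N} with |I| = k, the number of indices j ∈ I such that |A_j \ ⋃_{i ∈ I, i ≠ j} A_i| ≥ N/(6k) is at least k/2. -/
/-!
Let `m = ⌊N/(2k)⌋`, choose `m` disjoint blocks of size `2k` inside `{1, …, N}`, and let `A_j` pick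
one uniformly random point of every block, independently over blocks and over `j`; then
`|A_j| = m` holds automatically.

If a `k`-set `I` violates the conclusion, it contains a set `B` of `⌊k/2⌋ + 1` indices `j`, each of
which collides with another index of `I` in more than `m - N/(6k) ≥ 0.63 m` blocks
(for `m ≥ 10`). Hence the number
`collisions (I \ B) B`, summed over the blocks, is at least `0.63 m |B|`. Within one block, reveal
the points of `I \ B` first and then those of `B` one at a time. A new point landing on a point of
`I \ B` adds `1` to the number of collisions, and one landing on an earlier point of `B` adds at most
`2` (`collisions_insert_le`). Since the block has size `2k`, the mean is at most
`|B| (1/4 + 2 · 1/8) = |B| / 2`, and the same exposure bounds the exponential moment (`mgf_le`).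
By independence of the blocks a fixed pair `(I, B)` is violating with probability
`exp (-Ω (m k))`, which beats the at most `N ^ (2k)` pairs because `m ≫ log N`.
-/

open Finset in
/-- For a colouring `a` of the indices, the number of `j ∈ B` sharing their colour with another
index of `R ∪ B`. -/
def collisions {ι : Type*} [DecidableEq ι] {q : ℕ} (R B : Finset ι) (a : ι → Fin q) : ℕ :=
  (B.filter (fun j => ∃ i ∈ (R ∪ B).erase j, a i = a j)).card

section Moments

open Finset

variable {ι : Type*} [DecidableEq ι] {q : ℕ}

/-- Adding `j` to `B` creates at most one new collision if `j` hits a colour of `R`, at most two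
(`j` itself and a previously isolated index) if it hits a colour of `B`, and none otherwise. -/
lemma collisions_insert_le (R B : Finset ι) (j : ι) (hRB : Disjoint R B)
    (a : ι → Fin q) :
    collisions R (insert j B) a ≤ collisions R B a +
      (if a j ∈ R.image a then 1 else if a j ∈ B.image a then 2 else 0) := by
  unfold collisions
  set T := B.filter (fun j => ∃ i ∈ (R ∪ B).erase j, a i = a j) with hT
  split_ifs with h1 h2
  · obtain ⟨r, hr, hra⟩ := mem_image.1 h1
    refine (card_le_card (t := insert j T) ?_).trans (card_insert_le _ _)
    intro i hi
    simp only [hT, mem_filter, mem_insert, mem_erase, mem_union] at hi ⊢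
    obtain ⟨hi1, l, ⟨hl1, hl2⟩, hl3⟩ := hi
    have hri : i ∈ B → r ≠ i := fun hb h => disjoint_left.1 hRB hr (h ▸ hb)
    by_cases hlj : l = j
    · subst hlj
      rcases hi1 with h | h
      · exact Or.inl h
      · exact Or.inr ⟨h, r, ⟨hri h, Or.inl hr⟩, hra.trans hl3⟩
    · rcases hi1 with h | h
      · exact Or.inl h
      · exact Or.inr ⟨h, l, ⟨hl1, by tauto⟩, hl3⟩
  · obtain ⟨r, hr, hra⟩ := mem_image.1 h2
    have : (insert j (insert r T)).card ≤ T.card + 2 :=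
      (card_insert_le _ _).trans (Nat.succ_le_succ (card_insert_le _ _))
    refine (card_le_card (t := insert j (insert r T)) ?_).trans this
    intro i hi
    simp only [hT, mem_filter, mem_insert, mem_erase, mem_union] at hi ⊢
    obtain ⟨hi1, l, ⟨hl1, hl2⟩, hl3⟩ := hi
    by_cases hir : i = r
    · exact Or.inr (Or.inl hir)
    by_cases hlj : l = j
    · subst hlj
      rcases hi1 with h | h
      · exact Or.inl h
      · exact Or.inr (Or.inr ⟨h, r, ⟨fun h => hir h.symm, Or.inr hr⟩, hra.trans hl3⟩)
    · rcases hi1 with h | h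
      · exact Or.inl h
      · exact Or.inr (Or.inr ⟨h, l, ⟨hl1, by tauto⟩, hl3⟩)
  · refine card_le_card ?_
    intro i hi
    simp only [hT, mem_filter, mem_insert, mem_erase, mem_union, mem_image, not_exists,
      not_and] at hi h1 h2 ⊢
    obtain ⟨hi1, l, ⟨hl1, hl2⟩, hl3⟩ := hi
    rcases hi1 with h | h
    · subst h
      rcases hl2 with h | h | h
      · exact absurd hl3 (h1 l h)
      · exact absurd h hl1
      · exact absurd hl3 (h2 l h)
    · refine ⟨h, l, ⟨hl1, ?_⟩, hl3⟩
      rcases hl2 with h' | h' | h'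
      · exact Or.inl h'
      · subst h'
        exact absurd hl3.symm (h2 i h)
      · exact Or.inr h'

lemma collisions_update (R B : Finset ι) (j : ι) (hR : j ∉ R) (hB : j ∉ B)
    (a : ι → Fin q) (v : Fin q) :
    collisions R B (Function.update a j v) = collisions R B a := by
  unfold collisions
  congr 1
  apply filter_congr
  intro i hi
  have hij : i ≠ j := fun h => hB (h ▸ hi)
  rw [Function.update_of_ne hij]
  refine exists_congr fun l => and_congr_right fun hl => ?_
  have hlj : l ≠ j := by
    rintro rfl
    simp [hR, hB] at hl
  rw [Function.update_of_ne hlj]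

/-- Resampling one coordinate of a uniformly random colouring leaves its distribution unchanged. -/
lemma resample [Fintype ι] (j : ι) (Ψ : (ι → Fin q) → ℝ) :
    ∑ a : ι → Fin q, ∑ v : Fin q, Ψ (Function.update a j v) = q * ∑ a, Ψ a := by
  have h : ∑ p : (ι → Fin q) × Fin q, Ψ (Function.update p.1 j p.2)
      = ∑ p : (ι → Fin q) × Fin q, Ψ p.1 := by
    refine Finset.sum_nbij' (fun p => (Function.update p.1 j p.2, p.1 j))
      (fun p => (Function.update p.1 j p.2, p.1 j)) ?_ ?_ ?_ ?_ ?_ <;> simp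
  rw [Fintype.sum_prod_type, Fintype.sum_prod_type] at h
  rw [h]
  simp [mul_sum]

/-- Exponential moment of the number of collisions of a uniformly random colouring, unnormalised. -/
lemma mgf_le [Fintype ι] (hq : 0 < q) (t : ℝ) (ht : 0 ≤ t) (R B : Finset ι) (hRB : Disjoint R B) :
    ∑ a : ι → Fin q, Real.exp (t * collisions R B a) ≤
      (q : ℝ) ^ Fintype.card ι *
        Real.exp ((R.card * B.card * (Real.exp t - 1) +
          B.card * (B.card - 1) / 2 * (Real.exp (2 * t) - 1)) / q) := by
  have hq' : (0 : ℝ) < q := by exact_mod_cast hq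
  have hx : 0 ≤ Real.exp t - 1 := by linarith [Real.add_one_le_exp t]
  have hy : 0 ≤ Real.exp (2 * t) - 1 := by linarith [Real.add_one_le_exp (2 * t)]
  set x := Real.exp t - 1 with hxdef
  set y := Real.exp (2 * t) - 1 with hydef
  induction B using Finset.induction_on with
  | empty => simp [collisions]
  | insert j B hj ih =>
    rw [disjoint_insert_right] at hRB
    obtain ⟨hjR, hRB⟩ := hRB
    specialize ih hRB
    have hinc : ∀ a : ι → Fin q, Real.exp (t * collisions R (insert j B) a) ≤
        Real.exp (t * collisions R B a) *
          (1 + (if a j ∈ R.image a then x else 0) + (if a j ∈ B.image a then y else 0)) := by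
      intro a
      have h := collisions_insert_le R B j hRB a
      have h' : (collisions R (insert j B) a : ℝ) ≤ collisions R B a +
          (if a j ∈ R.image a then 1 else if a j ∈ B.image a then 2 else 0) := by
        exact_mod_cast h
      have h2 : Real.exp (t * collisions R (insert j B) a) ≤ Real.exp (t * collisions R B a) *
          Real.exp (t * (if a j ∈ R.image a then 1 else if a j ∈ B.image a then 2 else 0)) := by
        rw [← Real.exp_add, ← mul_add]
        exact Real.exp_le_exp.2 (mul_le_mul_of_nonneg_left h' ht)
      refine h2.trans (mul_le_mul_of_nonneg_left ?_ (Real.exp_pos _).le)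
      have e1 : Real.exp t = 1 + x := by rw [hxdef]; ring
      have e2 : Real.exp (t * 2) = 1 + y := by rw [hydef, mul_comm]; ring
      split_ifs <;> simp [e1, e2] <;> linarith
    have hsum : ∀ a : ι → Fin q,
        ∑ v : Fin q, (1 + (if v ∈ R.image a then x else 0) + (if v ∈ B.image a then y else 0))
          ≤ q + R.card * x + B.card * y := by
      intro a
      rw [sum_add_distrib, sum_add_distrib, ← sum_filter, ← sum_filter]
      simp only [sum_const, nsmul_eq_mul, filter_univ_mem, card_univ, Fintype.card_fin, mul_one]
      have c1 : ((R.image a).card : ℝ) ≤ R.card := by exact_mod_cast card_image_le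
      have c2 : ((B.image a).card : ℝ) ≤ B.card := by exact_mod_cast card_image_le
      gcongr
    have himg : ∀ (S : Finset ι), j ∉ S → ∀ (a : ι → Fin q) (v : Fin q),
        S.image (Function.update a j v) = S.image a := by
      intro S hS a v
      refine image_congr fun i hi => ?_
      have hij : i ≠ j := by
        rintro rfl
        exact hS hi
      exact Function.update_of_ne hij _ _
    have key : (q : ℝ) * ∑ a : ι → Fin q, Real.exp (t * collisions R (insert j B) a) ≤
        (q + R.card * x + B.card * y) * ∑ a : ι → Fin q, Real.exp (t * collisions R B a) := by
      rw [← resample j, mul_sum]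
      refine sum_le_sum fun a _ => ?_
      calc _ ≤ ∑ v : Fin q, Real.exp (t * collisions R B a) *
            (1 + (if v ∈ R.image a then x else 0) + (if v ∈ B.image a then y else 0)) := by
            refine sum_le_sum fun v _ => ?_
            have := hinc (Function.update a j v)
            rwa [collisions_update R B j hjR hj, himg R hjR, himg B hj,
              Function.update_self] at this
        _ ≤ _ := by
            rw [← mul_sum, mul_comm]
            exact mul_le_mul_of_nonneg_right (hsum a) (Real.exp_pos _).le
    have key2 : ∑ a : ι → Fin q, Real.exp (t * collisions R (insert j B) a) ≤
        (1 + (R.card * x + B.card * y) / q) *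
          ∑ a : ι → Fin q, Real.exp (t * collisions R B a) := by
      have e : (1 + (R.card * x + B.card * y) / q) = (q + R.card * x + B.card * y) / q := by
        field_simp; ring
      rw [e, div_mul_eq_mul_div, le_div_iff₀ hq', mul_comm]
      exact key
    refine key2.trans ?_
    have h1 : 1 + (R.card * x + B.card * y) / q ≤ Real.exp ((R.card * x + B.card * y) / q) := by
      linarith [Real.add_one_le_exp ((R.card * x + B.card * y) / (q : ℝ))]
    refine (mul_le_mul h1 ih (sum_nonneg fun _ _ => (Real.exp_pos _).le)
      (Real.exp_pos _).le).trans (le_of_eq ?_)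
    rw [mul_left_comm, ← Real.exp_add, card_insert_of_notMem hj]
    congr 2
    push_cast
    field_simp
    ring

/-- The probabilistic step: if `m` exceeds a large multiple of `log N`, some choice of `m`
colourings (one per block) has few total collisions for all pairs `B ⊆ I` at once. -/
lemma exists_colouring (N k m : ℕ) (hN : 2 ≤ N) (hk : 2 ≤ k) (hm : 1000 * Real.log N ≤ m) :
    ∃ F : Fin m → Fin N → Fin (2 * k), ∀ I B : Finset (Fin N), I.card = k → B ⊆ I →
      B.card = k / 2 + 1 →
        (∑ β, (collisions (I \ B) B (F β) : ℝ)) < 63 / 100 * m * B.card := by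
  by_contra! hcon
  set b := k / 2 + 1 with hb
  set P : Finset (Σ _ : Finset (Fin N), Finset (Fin N)) :=
    (powersetCard k (univ : Finset (Fin N))).sigma (fun I => powersetCard b I) with hP
  set Q : ℝ := ((2 * k : ℕ) : ℝ) with hQ
  have hQ0 : 0 < Q := by rw [hQ]; exact_mod_cast (by omega)
  have hlog : 0 < Real.log N := Real.log_pos (by exact_mod_cast (by omega))
  have hkb : (k : ℝ) ≤ 2 * b := by exact_mod_cast (by omega)
  have hbk : 2 * ((b : ℝ) - 1) ≤ k := by
    have : 2 * b ≤ k + 2 := by omega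
    have : 2 * (b : ℝ) ≤ k + 2 := by exact_mod_cast this
    linarith
  have hk0 : (2 : ℝ) ≤ k := by exact_mod_cast hk
  have hPcard : (P.card : ℝ) ≤ Real.exp (2 * k * Real.log N) := by
    have h1 : P.card ≤ N ^ k * N ^ k := by
      rw [hP, card_sigma, sum_congr rfl (g := fun _ => k.choose b)
        (fun I hI => by rw [card_powersetCard, (mem_powersetCard.1 hI).2])]
      rw [sum_const, smul_eq_mul, card_powersetCard, card_univ, Fintype.card_fin]
      exact Nat.mul_le_mul (Nat.choose_le_pow _ _)
        ((Nat.choose_le_two_pow _ _).trans (Nat.pow_le_pow_left hN k))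
    have h2 : Real.exp (2 * k * Real.log N) = (N : ℝ) ^ k * (N : ℝ) ^ k := by
      have : (2 * k * Real.log N) = ((k + k : ℕ) : ℝ) * Real.log N := by push_cast; ring
      rw [this, Real.exp_nat_mul, Real.exp_log (by exact_mod_cast (by omega)), pow_add]
    rw [h2]
    exact_mod_cast h1
  -- Chernoff with parameter `1/10`: the exponential moment costs `0.0575 m b`, the threshold gains
  -- `0.063 m b`, and the difference `0.0055 m b` is at least `(11/4000) m k` because `k ≤ 2 b`.
  have hmoment : ∀ p ∈ P, ∑ F : Fin m → Fin N → Fin (2 * k),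
      Real.exp (1 / 10 * (∑ β, (collisions (p.1 \ p.2) p.2 (F β) : ℝ) - 63 / 100 * m * b)) ≤
        Q ^ (N * m) * Real.exp (-(11 / 4000 * (m * k))) := by
    rintro ⟨I, B⟩ hp
    simp only [hP, mem_sigma, mem_powersetCard] at hp
    obtain ⟨⟨-, hI⟩, hBI, hB⟩ := hp
    simp only
    have hpull : ∀ F : Fin m → Fin N → Fin (2 * k),
        Real.exp (1 / 10 * (∑ β, (collisions (I \ B) B (F β) : ℝ) - 63 / 100 * m * b)) =
        (∏ β, Real.exp (1 / 10 * collisions (I \ B) B (F β))) *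
          Real.exp (-(63 / 1000 * m * b)) := by
      intro F
      rw [← Real.exp_sum, ← Real.exp_add, ← mul_sum]
      congr 1
      ring
    rw [sum_congr rfl (fun F _ => hpull F), ← sum_mul,
      ← Fintype.sum_pow (fun a : Fin N → Fin (2 * k) =>
        Real.exp (1 / 10 * (collisions (I \ B) B a : ℝ))) m]
    have hR : ((I \ B).card : ℝ) ≤ k / 2 := by
      have : (I \ B).card = k - b := by rw [card_sdiff_of_subset hBI, hI, hB]
      have h2 : 2 * (I \ B).card ≤ k := by omega
      have : 2 * ((I \ B).card : ℝ) ≤ k := by exact_mod_cast h2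
      linarith
    have hmgf := mgf_le (q := 2 * k) (by omega) (1 / 10) (by norm_num) (I \ B) B
      sdiff_disjoint
    rw [Fintype.card_fin, hB] at hmgf
    have hx : Real.exp (1 / 10) - 1 ≤ 11 / 100 := by
      have := Real.abs_exp_sub_one_sub_id_le (x := 1 / 10) (by norm_num [abs_of_pos])
      have := (abs_le.1 this).2
      linarith
    have hy : Real.exp (2 * (1 / 10)) - 1 ≤ 24 / 100 := by
      have := Real.abs_exp_sub_one_sub_id_le (x := 2 * (1 / 10)) (by norm_num [abs_of_pos])
      have := (abs_le.1 this).2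
      linarith
    have hb1 : (0 : ℝ) ≤ b - 1 := by rw [hb]; push_cast; linarith [Nat.cast_nonneg (α := ℝ) (k / 2)]
    have hexp : (((I \ B).card : ℝ) * b * (Real.exp (1 / 10) - 1) +
          b * (b - 1) / 2 * (Real.exp (2 * (1 / 10)) - 1)) / Q ≤ 575 / 10000 * b := by
      have hb0 : (0 : ℝ) ≤ b := by linarith
      rw [div_le_iff₀ hQ0]
      have i1 : ((I \ B).card : ℝ) * b * (Real.exp (1 / 10) - 1) ≤ k / 2 * b * (11 / 100) := by
        calc _ ≤ ((I \ B).card : ℝ) * b * (11 / 100) := by gcongr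
          _ ≤ _ := by gcongr
      have i2 : (b : ℝ) * (b - 1) / 2 * (Real.exp (2 * (1 / 10)) - 1) ≤
          b * (k / 2) / 2 * (24 / 100) := by
        calc _ ≤ (b : ℝ) * (b - 1) / 2 * (24 / 100) := by gcongr
          _ ≤ _ := by gcongr; linarith
      have : Q = 2 * k := by rw [hQ]; push_cast; ring
      rw [this]
      linarith
    have hone := hmgf.trans (mul_le_mul_of_nonneg_left (Real.exp_le_exp.2 hexp) (by positivity))
    have hpow := pow_le_pow_left₀ (sum_nonneg fun _ _ => (Real.exp_pos _).le) hone m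
    refine (mul_le_mul_of_nonneg_right hpow (Real.exp_pos _).le).trans ?_
    rw [mul_pow, ← pow_mul, ← Real.exp_nat_mul, mul_assoc, ← Real.exp_add]
    refine mul_le_mul_of_nonneg_left (Real.exp_le_exp.2 ?_) (by positivity)
    have : (m : ℝ) * k ≤ m * (2 * b) := by gcongr
    linarith
  have hlow : Q ^ (N * m) ≤ ∑ F : Fin m → Fin N → Fin (2 * k), ∑ p ∈ P,
      Real.exp (1 / 10 * (∑ β, (collisions (p.1 \ p.2) p.2 (F β) : ℝ) - 63 / 100 * m * b)) := by
    have hc : Q ^ (N * m) = ∑ _F : Fin m → Fin N → Fin (2 * k), (1 : ℝ) := by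
      simp [hQ, pow_mul]
    rw [hc]
    refine sum_le_sum fun F _ => ?_
    obtain ⟨I, B, hI, hBI, hB, hle⟩ := hcon F
    have hmem : (⟨I, B⟩ : Σ _ : Finset (Fin N), Finset (Fin N)) ∈ P := by
      simp [hP, hI, hBI, hB]
    refine le_trans ?_ (single_le_sum (f := fun p : Σ _ : Finset (Fin N), Finset (Fin N) =>
      Real.exp (1 / 10 * (∑ β, (collisions (p.1 \ p.2) p.2 (F β) : ℝ) - 63 / 100 * m * b)))
      (fun _ _ => (Real.exp_pos _).le) hmem)
    rw [Real.one_le_exp_iff]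
    rw [hB] at hle
    simp only
    linarith
  rw [sum_comm] at hlow
  have hup := hlow.trans (sum_le_sum hmoment)
  rw [sum_const, nsmul_eq_mul] at hup
  have hfin : (P.card : ℝ) * Real.exp (-(11 / 4000 * (m * k))) < 1 := by
    refine (mul_le_mul_of_nonneg_right hPcard (Real.exp_pos _).le).trans_lt ?_
    rw [← Real.exp_add, Real.exp_lt_one_iff]
    have : 1000 * Real.log N * k ≤ m * k := by gcongr
    have : 0 < Real.log N * k := by positivity
    linarith
  have hQp : 0 < Q ^ (N * m) := by positivity
  nlinarith

end Moments

theorem exists_hard_matrix :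
    ∃ c : ℝ, 0 < c ∧
      ∀ N k : ℕ, 2 ≤ k → (k : ℝ) * Real.log N ≤ c * N →
        ∃ A : Fin N → Finset (Fin N),
          (∀ j, (A j).card = N / (2 * k)) ∧
          ∀ I : Finset (Fin N), I.card = k →
            (k : ℝ) / 2 ≤
              ((I.filter (fun j => (N : ℝ) / (6 * k) ≤
                  ((A j \ (I.erase j).biUnion A).card : ℝ))).card : ℝ) := by
  refine ⟨1 / 10000, by norm_num, fun N k hk hNk => ?_⟩
  have hk0 : (2 : ℝ) ≤ k := by exact_mod_cast hk
  set m := N / (2 * k) with hmdef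
  have hmN : m * (2 * k) ≤ N := Nat.div_mul_le_self _ _
  rcases Nat.lt_or_ge N 2 with hN | hN
    -- with fewer than two indices there is no `k`-element set `I`
  · refine ⟨fun _ => ∅, fun _ => ?_, fun I hI => ?_⟩
    · rw [Finset.card_empty, hmdef, Nat.div_eq_of_lt (by omega)]
    · have := Finset.card_le_univ I
      rw [Fintype.card_fin] at this
      omega
  have hlog : 69 / 100 ≤ Real.log N := by
    have h1 := Real.log_two_gt_d9
    have h2 : Real.log 2 ≤ Real.log N := Real.log_le_log (by norm_num) (by exact_mod_cast hN)
    linarith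
  have hmlt : (N : ℝ) < (m + 1) * (2 * k) := by
    have : N < (m + 1) * (2 * k) := by
      have := Nat.lt_mul_div_succ N (show 0 < 2 * k by omega)
      rw [mul_comm]; exact this
    exact_mod_cast this
  have hm : 1000 * Real.log N ≤ m := by
    have h1 : (k : ℝ) * (10000 * Real.log N) ≤ k * (2 * (m + 1)) := by linarith
    have h2 := le_of_mul_le_mul_left h1 (by linarith)
    linarith
  obtain ⟨F, hF⟩ := exists_colouring N k m hN hk hm
  obtain ⟨e⟩ : Nonempty (Fin m × Fin (2 * k) ↪ Fin N) := by
    refine Function.Embedding.nonempty_of_card_le ?_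
    simpa using hmN
  set A : Fin N → Finset (Fin N) := fun j => Finset.univ.image (fun β => e (β, F β j)) with hA
  have hinj : ∀ j, Function.Injective (fun β => e (β, F β j)) := by
    intro j β γ h
    exact congrArg Prod.fst (e.injective h)
  refine ⟨A, fun j => ?_, fun I hI => ?_⟩
  · rw [hA, Finset.card_image_of_injective _ (hinj j)]
    simp
  by_contra! hlt
  set good := I.filter (fun j => (N : ℝ) / (6 * k) ≤ ((A j \ (I.erase j).biUnion A).card : ℝ))
    with hgood
  have hcard : k / 2 + 1 ≤ (I \ good).card := by
    have hsd : (I \ good).card = k - good.card := by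
      rw [Finset.card_sdiff_of_subset (Finset.filter_subset _ _), hI]
    have : 2 * (good.card : ℝ) < k := by linarith
    have : 2 * good.card < k := by exact_mod_cast this
    omega
  obtain ⟨B, hBs, hB⟩ := Finset.exists_subset_card_eq hcard
  have hBI : B ⊆ I := hBs.trans Finset.sdiff_subset
  have hlt2 := hF I B hI hBI hB
  -- each `j ∈ B` collides in at least `0.63 m` blocks: every other block gives `A j` a private point
  have hrow : ∀ j ∈ B, 63 / 100 * (m : ℝ) ≤
      ((Finset.univ.filter (fun β => ∃ i ∈ I.erase j, F β i = F β j)).card : ℝ) := by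
    intro j hj
    have hjb := hBs hj
    rw [Finset.mem_sdiff] at hjb
    have hbad : ((A j \ (I.erase j).biUnion A).card : ℝ) < N / (6 * k) := by
      by_contra! h
      exact hjb.2 (Finset.mem_filter.2 ⟨hjb.1, h⟩)
    have hsub : (Finset.univ.filter (fun β => ¬ ∃ i ∈ I.erase j, F β i = F β j)).image
        (fun β => e (β, F β j)) ⊆ A j \ (I.erase j).biUnion A := by
      intro x hx
      obtain ⟨β, hβ, rfl⟩ := Finset.mem_image.1 hx
      rw [Finset.mem_sdiff]
      refine ⟨Finset.mem_image_of_mem _ (Finset.mem_univ _), fun hmem => ?_⟩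
      obtain ⟨i, hi, hi2⟩ := Finset.mem_biUnion.1 hmem
      obtain ⟨γ, -, hγ⟩ := Finset.mem_image.1 hi2
      have h3 := e.injective hγ
      rw [Prod.mk.injEq] at h3
      obtain ⟨rfl, h4⟩ := h3
      exact (Finset.mem_filter.1 hβ).2 ⟨i, hi, h4⟩
    have hle := Finset.card_le_card hsub
    rw [Finset.card_image_of_injective _ (hinj j)] at hle
    have htot := Finset.card_filter_add_card_filter_not (s := (Finset.univ : Finset (Fin m)))
      (fun β => ∃ i ∈ I.erase j, F β i = F β j)
    rw [Finset.card_univ, Fintype.card_fin] at htot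
    -- `m - (m + 1) / 3 ≥ 0.63 m` holds once `m ≥ 10`
    have hle' := (Nat.cast_le (α := ℝ)).2 hle
    have htot' := congrArg (Nat.cast (R := ℝ)) htot
    push_cast at htot'
    have hthird : (N : ℝ) / (6 * k) ≤ (m + 1) / 3 := by
      rw [div_le_iff₀ (by linarith)]
      linarith
    linarith
  have hdouble : ∑ β, (collisions (I \ B) B (F β) : ℝ) =
      ∑ j ∈ B, ((Finset.univ.filter (fun β => ∃ i ∈ I.erase j, F β i = F β j)).card : ℝ) := by
    simp only [collisions, Finset.sdiff_union_of_subset hBI, Finset.card_filter, Nat.cast_sum]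
    exact Finset.sum_comm
  have hge := Finset.sum_le_sum hrow
  rw [Finset.sum_const, nsmul_eq_mul, ← hdouble] at hge
  linarith
end
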